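/- arXiv:2406.13428 — 3 statements merged into one kernel-verified Lean document; each statement's English description precedes it below -/
import Mathlib

section
/- Lemma 4.2 (convergence of normalized hyperbolic Steiner symmetrizations, stated in the model, convex case): Let n ≥ 2, let C ⊂ ℝⁿ be a convex body with 0 in its interior, and let B be the closed ball centered at the origin with m(B) = m(C). Then there exist unit vectors u_1, u_2, … and real numbers r_1, r_2, … ∈ (0, 1] such that, setting C_0 := C and C_i := r_i·S_{u_i}C_{i-1} for i ≥ 1, one has m(C_i) = m(C) for every i and C_i converges to B in Hausdorff distance. -/
/-!
The idea is to squeeze `C` into ever smaller centered balls while keeping its mass.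
Call a body admissible if it is convex, compact, has `0` in its interior and has mass `m(C) = m(B(0,R))`.

*Normalization.* On each line parallel to `u` the density of `m` decreases with the distance from
`u^⊥`, so `m(S_u K) ≥ m(K)` (`mH_le_mH_steiner`); as `r ↦ m(rK)` is continuous, some `r ∈ (0,1]`
restores the mass (`exists_dilation`). Symmetrization followed by this contraction keeps a body
admissible and never enlarges its circumscribed centered ball.

*Uniform shrinking.* Suppose `K ⊆ B(0,ρ)` is admissible with `ρ ≥ R + ε`. Comparing masses, `K` omits
a point of `B(0,R+ε/2)`, and separation shows that its support function is at most `ρ - ε/4` on a cap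
of directions whose size depends only on `ε` and an upper bound for `ρ`. Since
`S_u K ⊆ (K + σ_u K)/2`, where `σ_u` is the reflection in `u^⊥`, one has
`h_{S_u K}(w) ≤ (h_K(w) + h_K(σ_u w))/2` (`inner_le_of_mem_steiner`). Reflecting the cap to each
member of a finite cover of the sphere by caps of the same size thus spreads the deficit everywhere,
losing a factor of at most `2` per step (`exists_spread`). So finitely many steps reduce `ρ` by a
uniform amount (`exists_shrink`), and every `B(0,R+ε)` is reached (`exists_reach`). No compactness
theorem for convex bodies is involved.

*Conclusion.* The finite chains are joined to one sequence (`exists_chain`) whose members eventually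
lie in each `B(0,R+ε)`. An admissible body inside a ball slightly larger than `B(0,R)` contains one
slightly smaller, since otherwise a half-space would cut off too much mass
(`exists_contains_ball`). This gives Hausdorff convergence.
-/

open MeasureTheory Set Metric Filter
open scoped RealInnerProductSpace ENNReal NNReal Topology Pointwise

noncomputable section

namespace PPI

/-- `n`-dimensional Euclidean space. -/
abbrev E (m : ℕ) := EuclideanSpace ℝ (Fin m)

/-- The spherical measure `M_s(A) = ∫_A (1+‖x‖²)^{-(n+1)/2} dx`. -/
def Ms (n : ℕ) (A : Set (E n)) : ℝ :=
  ∫ x in A, (1 + ‖x‖ ^ 2) ^ (-(((n : ℝ) + 1) / 2))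

/-- The hyperbolic weight measure `m(A) = ∫_A (1+‖y‖²)^{-1/2} dy`. -/
def mH (n : ℕ) (A : Set (E n)) : ℝ :=
  ∫ y in A, (1 + ‖y‖ ^ 2) ^ (-(1 / 2 : ℝ))

/-- The chord set `A_{u,x'} = {t : x' + t u ∈ A}`. -/
def chord {m : ℕ} (u : E m) (A : Set (E m)) (x' : E m) : Set ℝ :=
  {t : ℝ | x' + t • u ∈ A}

/-- Steiner symmetrization of `A` in direction `u`. -/
def steiner {m : ℕ} (u : E m) (A : Set (E m)) : Set (E m) :=
  {x | ∃ x' t, ⟪x', u⟫ = 0 ∧ x = x' + t • u ∧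
    (chord u A x').Nonempty ∧ μH[1] (chord u A x') < ⊤ ∧
    |t| ≤ (μH[1] (chord u A x')).toReal / 2}

/-- Orthogonal projection (shadow) of `C` onto the hyperplane `u^⊥` (`u` a unit vector). -/
def shadow {m : ℕ} (u : E m) (C : Set (E m)) : Set (E m) :=
  (fun x => x - ⟪x, u⟫ • u) '' C

/-- The projection body `ΠC`. -/
def projBody (m : ℕ) (C : Set (E m)) : Set (E m) :=
  {x | ∀ u : E m, ‖u‖ = 1 → ⟪x, u⟫ ≤ (μH[(m : ℝ) - 1] (shadow u C)).toReal}

/-- The polar body of a set in `ℝⁿ`. -/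
def polarSet {m : ℕ} (C : Set (E m)) : Set (E m) :=
  {y | ∀ x ∈ C, ⟪y, x⟫ ≤ 1}

/-- The polar projection body `Π*C`. -/
def polarProjBody (m : ℕ) (C : Set (E m)) : Set (E m) :=
  polarSet (projBody m C)

/-- The last standard basis vector `e_{n+1}` of `ℝ^{n+1}`. -/
def eL (n : ℕ) : E (n + 1) := EuclideanSpace.single (Fin.last n) 1

/-- The open upper hemisphere `S^n_+`. -/
def upperHemi (n : ℕ) : Set (E (n + 1)) :=
  {v | ‖v‖ = 1 ∧ 0 < ⟪v, eL n⟫}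

/-- The gnomonic projection `g(v) = v/(v·e_{n+1}) − e_{n+1}`, with `ℝⁿ = e_{n+1}^⊥`
identified with `EuclideanSpace ℝ (Fin n)` via the first `n` coordinates. -/
def gmap (n : ℕ) (v : E (n + 1)) : E n :=
  (EuclideanSpace.equiv (Fin n) ℝ).symm fun i => v (Fin.castSucc i) / ⟪v, eL n⟫

/-- The point `x + e_{n+1} ∈ ℝ^{n+1}` associated to `x ∈ ℝⁿ`. -/
def lift (n : ℕ) (x : E n) : E (n + 1) :=
  (EuclideanSpace.equiv (Fin (n + 1)) ℝ).symm (Fin.snoc (fun i => x i) 1)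

/-- The inverse gnomonic projection `g^{-1}(x) = (x+e_{n+1})/‖x+e_{n+1}‖`. -/
def gInv (n : ℕ) (x : E n) : E (n + 1) := ‖lift n x‖⁻¹ • lift n x

/-- The spherical polar body `A° = {v ∈ Sⁿ : v·w ≤ 0 for all w ∈ A}`. -/
def sphPolar (n : ℕ) (A : Set (E (n + 1))) : Set (E (n + 1)) :=
  {v | ‖v‖ = 1 ∧ ∀ w ∈ A, ⟪v, w⟫ ≤ 0}

/-- The spherical projection body `Π_S K = g^{-1}(Π g(K))`. -/
def sphProjBody (n : ℕ) (K : Set (E (n + 1))) : Set (E (n + 1)) :=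
  gInv n '' projBody n (gmap n '' K)

/-- The spherical cap of radius `α` centered at `e_{n+1}`. -/
def sphCap (n : ℕ) (α : ℝ) : Set (E (n + 1)) :=
  {v | ‖v‖ = 1 ∧ Real.arccos ⟪v, eL n⟫ ≤ α}

/-- A spherical convex body `K ∈ K_o(S^n_+)`: a closed subset of the open upper
hemisphere whose radial extension is convex and whose gnomonic image contains
`0` in its interior. -/
structure IsSphConvexBody (n : ℕ) (K : Set (E (n + 1))) : Prop where
  subset_upper : K ⊆ upperHemi n
  closed : IsClosed K
  radial_convex : Convex ℝ {x : E (n + 1) | ∃ r : ℝ, 0 ≤ r ∧ ∃ v ∈ K, x = r • v}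
  zero_mem_interior : (0 : E n) ∈ interior (gmap n '' K)

/-- `F(t) = ∫_0^{π/2 − arctan t} (sin r)^{n-1} dr`. -/
def Fs (n : ℕ) (t : ℝ) : ℝ :=
  ∫ r in (0 : ℝ)..(Real.pi / 2 - Real.arctan t), Real.sin r ^ (n - 1)

/-- `G(t) = ∫_0^{1/t} r^{n-1} (1+r²)^{-1/2} dr`. -/
def Gh (n : ℕ) (t : ℝ) : ℝ :=
  ∫ r in (0 : ℝ)..(1 / t), r ^ (n - 1) * (1 + r ^ 2) ^ (-(1 / 2 : ℝ))

/-- `ω_k`, the Lebesgue measure of the unit ball of `ℝ^k`. -/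
def omega (k : ℕ) : ℝ := (volume (Metric.ball (0 : E k) 1)).toReal


/-! ### Steiner symmetrization of convex bodies -/

lemma isCompact_chord {n : ℕ} {u : E n} (hu : ‖u‖ = 1) {K : Set (E n)} (hK : IsCompact K)
    (x' : E n) : IsCompact (chord u K x') := by
  have h : Topology.IsClosedEmbedding (fun t : ℝ => x' + t • u) := by
    apply Isometry.isClosedEmbedding
    intro a b
    rw [edist_dist, edist_dist, dist_add_left, dist_eq_norm, dist_eq_norm, ← sub_smul, norm_smul,
      hu, mul_one]
  exact h.isCompact_preimage hK

/-- The chord lengths entering the definition of `steiner` may be replaced by pairs of points of `K`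
on a common line parallel to `u`. -/
lemma mem_steiner_iff {n : ℕ} {u : E n} (hu : ‖u‖ = 1) {K : Set (E n)} (hK : IsCompact K)
    (hconv : Convex ℝ K) (x : E n) :
    x ∈ steiner u K ↔ ∃ (x' : E n) (a b t : ℝ), ⟪x', u⟫ = 0 ∧ x' + a • u ∈ K ∧
      x' + b • u ∈ K ∧ x = x' + t • u ∧ 2 * |t| ≤ b - a := by
  simp only [steiner, Set.mem_ofPred_eq, hausdorffMeasure_real]
  constructor
  · rintro ⟨x', t, h0, rfl, hne, h1, h2⟩
    have hc := isCompact_chord hu hK x'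
    refine ⟨x', sInf (chord u K x'), sSup (chord u K x'), t, h0, hc.sInf_mem hne,
      hc.sSup_mem hne, rfl, ?_⟩
    have hsub : chord u K x' ⊆ Icc (sInf (chord u K x')) (sSup (chord u K x')) := fun s hs =>
      ⟨csInf_le hc.bddBelow hs, le_csSup hc.bddAbove hs⟩
    have h3 := measure_mono (μ := volume) hsub
    rw [Real.volume_Icc] at h3
    have h4 : (volume (chord u K x')).toReal ≤ sSup (chord u K x') - sInf (chord u K x') := by
      refine ENNReal.toReal_le_of_le_ofReal ?_ h3
      have := csInf_le_csSup hne hc.bddBelow hc.bddAbove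
      linarith
    linarith
  · rintro ⟨x', a, b, t, h0, ha, hb, rfl, h⟩
    have hfin : volume (chord u K x') < ⊤ := (isCompact_chord hu hK x').measure_lt_top
    refine ⟨x', t, h0, rfl, ⟨a, ha⟩, hfin, ?_⟩
    have hsub : Icc a b ⊆ chord u K x' := by
      have hc : Convex ℝ (chord u K x') := by
        intro s hs r hr α β hα hβ hαβ
        have := hconv hs hr hα hβ hαβ
        simp only [chord, Set.mem_ofPred_eq]
        convert this using 1
        have : x' = (α + β) • x' := by rw [hαβ, one_smul]
        nth_rewrite 1 [this]
        simp only [smul_eq_mul]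
        module
      exact hc.ordConnected.out ha hb
    have h3 := measure_mono (μ := volume) hsub
    rw [Real.volume_Icc] at h3
    have h4 := (ENNReal.ofReal_le_iff_le_toReal hfin.ne).1 h3
    linarith

lemma convex_steiner {n : ℕ} {u : E n} (hu : ‖u‖ = 1) {K : Set (E n)} (hK : IsCompact K)
    (hconv : Convex ℝ K) : Convex ℝ (steiner u K) := by
  intro x hx y hy α β hα hβ hαβ
  rw [mem_steiner_iff hu hK hconv] at hx hy ⊢
  obtain ⟨x', a, b, t, h0, ha, hb, rfl, h⟩ := hx
  obtain ⟨y', c, d, s, k0, hc, hd, rfl, k⟩ := hy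
  refine ⟨α • x' + β • y', α * a + β * c, α * b + β * d, α * t + β * s, ?_, ?_, ?_, ?_, ?_⟩
  · rw [inner_add_left, real_inner_smul_left, real_inner_smul_left, h0, k0]; simp
  · convert hconv ha hc hα hβ hαβ using 1; module
  · convert hconv hb hd hα hβ hαβ using 1; module
  · module
  · have h1 : |α * t + β * s| ≤ α * |t| + β * |s| := by
      refine (abs_add_le _ _).trans ?_
      rw [abs_mul, abs_mul, abs_of_nonneg hα, abs_of_nonneg hβ]
    nlinarith [mul_le_mul_of_nonneg_left h hα, mul_le_mul_of_nonneg_left k hβ]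

lemma isCompact_steiner {n : ℕ} {u : E n} (hu : ‖u‖ = 1) {K : Set (E n)} (hK : IsCompact K)
    (hconv : Convex ℝ K) : IsCompact (steiner u K) := by
  -- The symmetral is a continuous image of a compact set of triples (endpoint, endpoint, position).
  let T : Set (E n × E n × ℝ) := (K ×ˢ (K ×ˢ Icc (-1 : ℝ) 1)) ∩
    {z | z.1 - ⟪z.1, u⟫ • u = z.2.1 - ⟪z.2.1, u⟫ • u}
  let g : E n × E n × ℝ → E n := fun z =>
    (z.1 - ⟪z.1, u⟫ • u) + (z.2.2 * ((⟪z.2.1, u⟫ - ⟪z.1, u⟫) / 2)) • u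
  have hT : IsCompact T := by
    refine (hK.prod (hK.prod isCompact_Icc)).inter_right (isClosed_eq ?_ ?_) <;> fun_prop
  have hg : Continuous g := by fun_prop
  have huu : ⟪u, u⟫ = 1 := by rw [real_inner_self_eq_norm_sq, hu]; norm_num
  convert hT.image hg using 1
  ext x
  rw [mem_steiner_iff hu hK hconv]
  constructor
  · rintro ⟨x', a, b, t, h0, ha, hb, rfl, h⟩
    have e : ∀ s : ℝ, ⟪x' + s • u, u⟫ = s := fun s => by
      rw [inner_add_left, real_inner_smul_left, h0, huu]; ring
    refine ⟨(x' + a • u, x' + b • u, 2 * t / (b - a)), ⟨⟨ha, hb, ?_⟩, ?_⟩, ?_⟩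
    · have hba : 0 ≤ b - a := le_trans (by positivity) h
      rw [mem_Icc, ← abs_le, abs_div, abs_mul, abs_two, abs_of_nonneg hba]
      exact div_le_one_of_le₀ h hba
    · simp only [Set.mem_ofPred_eq, e]; module
    · simp only [g, e]
      have : 2 * t / (b - a) * ((b - a) / 2) = t := by
        rcases eq_or_ne (b - a) 0 with h' | h'
        · have : t = 0 := by
            have : |t| ≤ 0 := by linarith
            simpa using this
          simp [this]
        · field_simp
      rw [this]; module
  · rintro ⟨⟨p, q, s⟩, ⟨⟨hp, hq, hs⟩, hpq⟩, rfl⟩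
    simp only [Set.mem_ofPred_eq] at hpq hp hq hs
    have h0 : ⟪p - ⟪p, u⟫ • u, u⟫ = 0 := by
      rw [inner_sub_left, real_inner_smul_left, huu]; ring
    have hp' : p - ⟪p, u⟫ • u + ⟪p, u⟫ • u ∈ K := by simpa using hp
    have hq' : p - ⟪p, u⟫ • u + ⟪q, u⟫ • u ∈ K := by rw [hpq]; simpa using hq
    have hs' : 2 * |s * ((⟪q, u⟫ - ⟪p, u⟫) / 2)| ≤ |⟪q, u⟫ - ⟪p, u⟫| := by
      rw [abs_mul, abs_div, abs_two]
      have := abs_le.2 hs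
      nlinarith [abs_nonneg (⟪q, u⟫ - ⟪p, u⟫)]
    rcases le_total ⟪p, u⟫ ⟪q, u⟫ with h | h
    · exact ⟨_, _, _, _, h0, hp', hq', rfl, by rwa [abs_of_nonneg (sub_nonneg.2 h)] at hs'⟩
    · refine ⟨_, _, _, _, h0, hq', hp', rfl, ?_⟩
      rwa [abs_of_nonpos (sub_nonpos.2 h), neg_sub] at hs'

lemma zero_mem_interior_steiner {n : ℕ} {u : E n} (hu : ‖u‖ = 1) {K : Set (E n)}
    (hK : IsCompact K) (hconv : Convex ℝ K) (h0 : (0 : E n) ∈ interior K) :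
    (0 : E n) ∈ interior (steiner u K) := by
  obtain ⟨ε, hε, hb⟩ := Metric.mem_nhds_iff.1 (mem_interior_iff_mem_nhds.1 h0)
  refine mem_interior_iff_mem_nhds.2 (Metric.mem_nhds_iff.2 ⟨ε, hε, fun x hx => ?_⟩)
  rw [mem_steiner_iff hu hK hconv]
  have huu : ⟪u, u⟫ = 1 := by rw [real_inner_self_eq_norm_sq, hu]; norm_num
  have hpy : ∀ s : ℝ, ‖x - ⟪x, u⟫ • u + s • u‖ ^ 2 = ‖x - ⟪x, u⟫ • u‖ ^ 2 + s ^ 2 := fun s => by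
    rw [norm_add_sq_real, real_inner_smul_right, inner_sub_left, real_inner_smul_left, huu,
      norm_smul, hu, Real.norm_eq_abs, mul_pow, sq_abs]
    ring
  have hx' := hpy ⟪x, u⟫
  rw [sub_add_cancel] at hx'
  have hm : ∀ s : ℝ, s ^ 2 = ⟪x, u⟫ ^ 2 → x - ⟪x, u⟫ • u + s • u ∈ K := fun s hs => by
    apply hb
    rw [mem_ball_zero_iff] at hx ⊢
    have := hpy s
    rw [hs, ← hx', sq_eq_sq₀ (norm_nonneg _) (norm_nonneg _)] at this
    rwa [this]
  refine ⟨x - ⟪x, u⟫ • u, -|⟪x, u⟫|, |⟪x, u⟫|, ⟪x, u⟫, ?_, hm _ (by simp), hm _ (by simp),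
    by simp, by linarith⟩
  rw [inner_sub_left, real_inner_smul_left, huu]; ring

/-- The symmetral of `K` lies in the Minkowski average of `K` and its reflection in `u^⊥`; this is
the resulting inequality for support functions, read off at a single point. -/
lemma inner_le_of_mem_steiner {n : ℕ} {u : E n} (hu : ‖u‖ = 1) {K : Set (E n)}
    (hK : IsCompact K) (hconv : Convex ℝ K) {w : E n} {c d : ℝ}
    (hc : ∀ y ∈ K, ⟪y, w⟫ ≤ c) (hd : ∀ y ∈ K, ⟪y, w - (2 * ⟪w, u⟫) • u⟫ ≤ d) :
    ∀ x ∈ steiner u K, ⟪x, w⟫ ≤ (c + d) / 2 := by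
  intro x hx
  rw [mem_steiner_iff hu hK hconv] at hx
  obtain ⟨x', a, b, t, h0, ha, hb, rfl, h⟩ := hx
  have huu : ⟪u, u⟫ = 1 := by rw [real_inner_self_eq_norm_sq, hu]; norm_num
  have e1 : ∀ s : ℝ, ⟪x' + s • u, w⟫ = ⟪x', w⟫ + s * ⟪w, u⟫ := fun s => by
    rw [inner_add_left, real_inner_smul_left, real_inner_comm w u]
  have e2 : ∀ s : ℝ, ⟪x' + s • u, w - (2 * ⟪w, u⟫) • u⟫ = ⟪x', w⟫ - s * ⟪w, u⟫ := fun s => by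
    rw [inner_sub_right, e1, real_inner_smul_right, inner_add_left, real_inner_smul_left, h0, huu]
    ring
  have c1 := hc _ ha
  have c2 := hc _ hb
  have d1 := hd _ ha
  have d2 := hd _ hb
  rw [e1] at c1 c2 ⊢
  rw [e2] at d1 d2
  obtain ⟨t1, t2⟩ := abs_le.1 (show |t| ≤ (b - a) / 2 by linarith)
  rcases le_total 0 ⟪w, u⟫ with h' | h'
  · nlinarith [mul_le_mul_of_nonneg_right t2 h']
  · nlinarith [mul_le_mul_of_nonpos_right t1 h']

/-! ### Symmetrization does not decrease the hyperbolic mass -/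

/-- The density of `mH`. -/
def wt (n : ℕ) (y : E n) : ℝ := (1 + ‖y‖ ^ 2) ^ (-(1 / 2 : ℝ))

lemma mH_eq (n : ℕ) (A : Set (E n)) : mH n A = ∫ y in A, wt n y := rfl

lemma wt_pos {n : ℕ} (y : E n) : 0 < wt n y := Real.rpow_pos_of_pos (by positivity) _

lemma continuous_wt (n : ℕ) : Continuous (wt n) :=
  Continuous.rpow_const (by fun_prop) fun y => Or.inl (by positivity)

lemma wt_anti {n : ℕ} {x y : E n} (h : ‖x‖ ≤ ‖y‖) : wt n y ≤ wt n x := by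
  refine Real.rpow_le_rpow_of_nonpos (by positivity) ?_ (by norm_num)
  gcongr

lemma integrableOn_wt {n : ℕ} {K : Set (E n)} (hK : IsCompact K) : IntegrableOn (wt n) K :=
  (continuous_wt n).continuousOn.integrableOn_compact hK

lemma mH_eq_lintegral {n : ℕ} (K : Set (E n)) :
    mH n K = (∫⁻ y in K, ENNReal.ofReal (wt n y)).toReal := by
  rw [mH_eq, integral_eq_lintegral_of_nonneg_ae (ae_of_all _ fun y => (wt_pos y).le)
    (continuous_wt n).aestronglyMeasurable]

/-- On the line, a symmetric decreasing density has at least as much mass on the centered interval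
of length at least `volume A` as on `A`. -/
lemma lintegral_le_centered {A : Set ℝ} (hA : MeasurableSet A) {l : ℝ} (hl : 0 ≤ l)
    (hvol : volume A ≤ ENNReal.ofReal (2 * l)) {g : ℝ → ℝ≥0∞} (hgm : Measurable g)
    (hg : ∀ s t : ℝ, |s| ≤ |t| → g t ≤ g s) :
    ∫⁻ t in A, g t ≤ ∫⁻ t in Icc (-l) l, g t := by
  set I := Icc (-l) l with hI
  have hIm : MeasurableSet I := measurableSet_Icc
  have hIv : volume I = ENNReal.ofReal (2 * l) := by
    rw [hI, Real.volume_Icc]; congr 1; ring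
  have hvd : volume (A \ I) ≤ volume (I \ A) := by
    have h1 := measure_inter_add_sdiff (μ := volume) A hIm
    have h2 := measure_inter_add_sdiff (μ := volume) I hA
    have hfin : volume (A ∩ I) ≠ ⊤ :=
      ((measure_mono inter_subset_right).trans_lt (hIv ▸ ENNReal.ofReal_lt_top)).ne
    rw [← hIv, ← h1, ← h2, inter_comm I A] at hvol
    exact (ENNReal.add_le_add_iff_left hfin).1 hvol
  have h1 : ∫⁻ t in A \ I, g t ≤ g l * volume (A \ I) := by
    rw [← setLIntegral_const]
    refine setLIntegral_mono measurable_const fun t ht => hg _ _ ?_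
    by_contra! h
    rw [abs_of_nonneg hl] at h
    exact ht.2 (abs_le.1 h.le)
  have h2 : g l * volume (I \ A) ≤ ∫⁻ t in I \ A, g t := by
    rw [← setLIntegral_const]
    refine setLIntegral_mono hgm fun t ht => hg _ _ ?_
    rw [abs_of_nonneg hl]
    exact abs_le.2 ht.1
  calc ∫⁻ t in A, g t = (∫⁻ t in A ∩ I, g t) + ∫⁻ t in A \ I, g t :=
        (lintegral_inter_add_sdiff g A hIm).symm
    _ ≤ (∫⁻ t in I ∩ A, g t) + ∫⁻ t in I \ A, g t := by
        rw [inter_comm A I]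
        refine add_le_add le_rfl ?_
        exact h1.trans ((by gcongr : g l * volume (A \ I) ≤ g l * volume (I \ A)).trans h2)
    _ = ∫⁻ t in I, g t := lintegral_inter_add_sdiff g I hA

/-- Coordinates `(x', t) ↦ x' + t u` on `u^⊥ × ℝ`. -/
def lineCoord {n : ℕ} (u : E n) (hu : ‖u‖ = 1) : ((ℝ ∙ u)ᗮ × ℝ) ≃ₗ[ℝ] E n where
  toFun p := (p.1 : E n) + p.2 • u
  map_add' p q := by simp only [Prod.fst_add, Prod.snd_add, Submodule.coe_add]; module
  map_smul' c p := by
    simp only [Prod.smul_fst, Prod.smul_snd, Submodule.coe_smul, RingHom.id_apply, smul_eq_mul]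
    module
  invFun x := (⟨x - ⟪x, u⟫ • u, by
    rw [Submodule.mem_orthogonal_singleton_iff_inner_left, inner_sub_left, real_inner_smul_left,
      real_inner_self_eq_norm_sq, hu]; ring⟩, ⟪x, u⟫)
  left_inv p := by
    have h : ⟪(p.1 : E n), u⟫ = 0 := Submodule.mem_orthogonal_singleton_iff_inner_left.1 p.1.2
    have h' : ⟪(p.1 : E n) + p.2 • u, u⟫ = p.2 := by
      rw [inner_add_left, h, real_inner_smul_left, real_inner_self_eq_norm_sq, hu]; ring
    ext1
    · ext1; simp only [h', add_sub_cancel_right]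
    · exact h'
  right_inv x := by simp

/-- Comparison of integrals over `ℝⁿ` line by line. By uniqueness of Haar measure the coordinates
`lineCoord` carry the product measure to a multiple of Lebesgue measure, which is all that is
needed to compare. -/
lemma lintegral_le_of_lines {n : ℕ} (u : E n) (hu : ‖u‖ = 1) {f g : E n → ℝ≥0∞}
    (hf : Measurable f) (hg : Measurable g)
    (h : ∀ x' : E n, ⟪x', u⟫ = 0 → ∫⁻ t : ℝ, f (x' + t • u) ≤ ∫⁻ t : ℝ, g (x' + t • u)) :
    ∫⁻ x, f x ≤ ∫⁻ x, g x := by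
  let φ : ((ℝ ∙ u)ᗮ × ℝ) ≃L[ℝ] E n := (lineCoord u hu).toContinuousLinearEquiv
  have hφm : Measurable φ := φ.continuous.measurable
  let ν : Measure (E n) := Measure.map φ ((volume : Measure (ℝ ∙ u)ᗮ).prod (volume : Measure ℝ))
  have : ν.IsAddHaarMeasure := φ.isAddHaarMeasure_map _
  have hν : (volume : Measure (E n)) = Measure.addHaarScalarFactor volume ν • ν :=
    Measure.isAddLeftInvariant_eq_smul _ _
  have key : ∫⁻ x, f x ∂ν ≤ ∫⁻ x, g x ∂ν := by
    rw [lintegral_map hf hφm, lintegral_map hg hφm,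
      lintegral_prod (fun a => f (φ a)) (hf.comp hφm).aemeasurable,
      lintegral_prod (fun a => g (φ a)) (hg.comp hφm).aemeasurable]
    exact lintegral_mono fun x' =>
      h x' (Submodule.mem_orthogonal_singleton_iff_inner_left.1 x'.2)
  rw [hν, lintegral_smul_measure, lintegral_smul_measure]
  gcongr

/-- By `lintegral_le_of_lines` this reduces to the comparison `lintegral_le_centered` on each line. -/
lemma mH_le_mH_steiner {n : ℕ} {u : E n} (hu : ‖u‖ = 1) {K : Set (E n)} (hK : IsCompact K)
    (hconv : Convex ℝ K) : mH n K ≤ mH n (steiner u K) := by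
  have hS := isCompact_steiner hu hK hconv
  rw [mH_eq_lintegral, mH_eq_lintegral]
  refine ENNReal.toReal_mono ?_ ?_
  · have := (integrableOn_wt hS).lintegral_lt_top
    exact this.ne
  rw [← lintegral_indicator hK.measurableSet, ← lintegral_indicator hS.measurableSet]
  have hw : Measurable fun y : E n => ENNReal.ofReal (wt n y) :=
    (continuous_wt n).measurable.ennreal_ofReal
  refine lintegral_le_of_lines u hu (hw.indicator hK.measurableSet)
    (hw.indicator hS.measurableSet) fun x' h0 => ?_
  have hline : Measurable fun t : ℝ => x' + t • u := by fun_prop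
  have e : ∀ A : Set (E n), (fun t : ℝ => A.indicator (fun y => ENNReal.ofReal (wt n y))
      (x' + t • u)) = (chord u A x').indicator fun t => ENNReal.ofReal (wt n (x' + t • u)) :=
    fun A => rfl
  have hcK := isCompact_chord hu hK x'
  have hcS := isCompact_chord hu hS x'
  rw [e, e, lintegral_indicator hcK.measurableSet, lintegral_indicator hcS.measurableSet]
  rcases (chord u K x').eq_empty_or_nonempty with hne | hne
  · simp [hne]
  have hfin : volume (chord u K x') < ⊤ := hcK.measure_lt_top
  refine (lintegral_le_centered hcK.measurableSet (l := (volume (chord u K x')).toReal / 2)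
    (by positivity) ?_ (hw.comp hline) ?_).trans ?_
  · rw [mul_div_cancel₀ _ two_ne_zero, ENNReal.ofReal_toReal hfin.ne]
  · intro s t hst
    refine ENNReal.ofReal_le_ofReal (wt_anti ?_)
    have hpy : ∀ s : ℝ, ‖x' + s • u‖ ^ 2 = ‖x'‖ ^ 2 + |s| ^ 2 := fun s => by
      rw [norm_add_sq_real, real_inner_smul_right, h0, norm_smul, hu, Real.norm_eq_abs]
      ring
    rw [← sq_le_sq₀ (norm_nonneg _) (norm_nonneg _), hpy, hpy]
    gcongr
  · refine lintegral_mono_set fun t ht => ?_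
    refine ⟨x', t, h0, rfl, hne, ?_, ?_⟩
    · rwa [hausdorffMeasure_real]
    · rw [hausdorffMeasure_real]; exact abs_le.2 ht

/-! ### Dilation and comparison of masses -/

lemma mH_mono {n : ℕ} {A B : Set (E n)} (hB : IsCompact B) (h : A ⊆ B) : mH n A ≤ mH n B :=
  setIntegral_mono_set (integrableOn_wt hB) (ae_of_all _ fun y => (wt_pos y).le)
    (ae_of_all _ h)

lemma mH_add_le {n : ℕ} {A B L : Set (E n)} (hB : MeasurableSet B) (hL : IsCompact L)
    (hAL : A ⊆ L) (hBL : B ⊆ L) (hd : Disjoint A B) : mH n A + mH n B ≤ mH n L := by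
  have hi := integrableOn_wt hL
  have h := setIntegral_union hd hB (hi.mono_set hAL) (hi.mono_set hBL)
  rw [mH_eq, mH_eq, ← h]
  exact mH_mono hL (union_subset hAL hBL)

lemma mH_closedBall_pos {n : ℕ} (x : E n) {r : ℝ} (hr : 0 < r) :
    0 < mH n (closedBall x r) := by
  rw [mH_eq, setIntegral_pos_iff_support_of_nonneg_ae (ae_of_all _ fun y => (wt_pos y).le)
    (integrableOn_wt (isCompact_closedBall x r))]
  have : Function.support (wt n) = univ := by
    ext y; simpa using (wt_pos y).ne'
  rw [this, univ_inter]
  exact measure_closedBall_pos _ _ hr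

/-- The mass of the dilate `r • K`, written as an integral over `K` by a change of variables. -/
def dilMass (n : ℕ) (K : Set (E n)) (r : ℝ) : ℝ := r ^ n * ∫ y in K, wt n (r • y)

lemma continuous_dilMass {n : ℕ} {K : Set (E n)} (hK : IsCompact K) :
    Continuous (dilMass n K) := by
  refine (continuous_pow n).mul (continuous_parametric_integral_of_continuous ?_ hK)
  exact (continuous_wt n).comp (continuous_fst.smul continuous_snd)

lemma dilMass_eq {n : ℕ} (K : Set (E n)) {r : ℝ} (hr : 0 < r) :
    dilMass n K r = mH n (r • K) := by
  rw [dilMass, Measure.setIntegral_comp_smul_of_pos volume (wt n) K hr, finrank_euclideanSpace,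
    Fintype.card_fin, smul_eq_mul, mul_inv_cancel_left₀ (pow_pos hr n).ne', mH_eq]

/-- The mass lost by contracting varies continuously from all of it to none, so every smaller positive
mass is attained. -/
lemma exists_dilation {n : ℕ} (hn : 2 ≤ n) {K : Set (E n)} (hK : IsCompact K) {m : ℝ}
    (hm : 0 < m) (hle : m ≤ mH n K) : ∃ r ∈ Ioc (0 : ℝ) 1, mH n (r • K) = m := by
  have h0 : dilMass n K 0 = 0 := by
    rw [dilMass, zero_pow (by omega), zero_mul]
  have h1 : dilMass n K 1 = mH n K := by rw [dilMass_eq K one_pos, one_smul]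
  obtain ⟨r, hr, hrm⟩ := intermediate_value_Icc zero_le_one
    (continuous_dilMass hK).continuousOn (show m ∈ Icc (dilMass n K 0) (dilMass n K 1) by
      rw [h0, h1]; exact ⟨hm.le, hle⟩)
  have hr0 : 0 < r := by
    refine lt_of_le_of_ne hr.1 ?_
    rintro rfl
    rw [h0] at hrm
    exact hm.ne hrm
  exact ⟨r, ⟨hr0, hr.2⟩, by rw [← dilMass_eq K hr0, hrm]⟩

/-- `ρ ↦ mH (B(0,ρ))` is continuous from the right at `R`, in the form needed below. -/
lemma exists_ball_mass_lt {n : ℕ} {R κ : ℝ} (hR : 0 < R) (hκ : 0 < κ) :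
    ∃ ε > 0, mH n (closedBall (0 : E n) (R + ε)) < mH n (closedBall (0 : E n) R) + κ := by
  have e : ∀ ρ : ℝ, 0 < ρ → mH n (closedBall (0 : E n) ρ) = dilMass n (closedBall (0 : E n) 1) ρ :=
    fun ρ hρ => by
      rw [dilMass_eq _ hρ, smul_unitClosedBall_of_nonneg hρ.le]
  have hc := (continuous_dilMass (n := n) (isCompact_closedBall (0 : E n) 1)).tendsto R
  obtain ⟨δ, hδ, h⟩ := Metric.tendsto_nhds_nhds.1 hc κ hκ
  refine ⟨δ / 2, by positivity, ?_⟩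
  have := h (x := R + δ / 2) (by
    rw [Real.dist_eq, add_sub_cancel_left, abs_of_pos (by positivity)]; linarith)
  rw [Real.dist_eq] at this
  rw [e _ hR, e _ (by positivity)]
  linarith [(abs_lt.1 this).2]

/-- A point outside `K` puts `K` into a half-space at distance at most `‖x‖` from the origin. -/
lemma exists_separating {n : ℕ} {K : Set (E n)} (hK : IsCompact K) (hconv : Convex ℝ K)
    (h0 : (0 : E n) ∈ K) {x : E n} (hx : x ∉ K) :
    ∃ v : E n, ‖v‖ = 1 ∧ ∀ y ∈ K, ⟪y, v⟫ ≤ ‖x‖ := by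
  obtain ⟨f, s, h1, h2⟩ := geometric_hahn_banach_closed_point hconv hK.isClosed hx
  have hs : 0 < s := by simpa using h1 0 h0
  let w := (InnerProductSpace.toDual ℝ (E n)).symm f
  have hw : ∀ y, f y = ⟪y, w⟫ := fun y => by
    rw [real_inner_comm]; simp [w]
  have hw0 : 0 < ‖w‖ := by
    rw [norm_pos_iff]
    intro h
    have := hw x
    rw [h, inner_zero_right] at this
    linarith
  refine ⟨‖w‖⁻¹ • w, by rw [norm_smul, norm_inv, norm_norm, inv_mul_cancel₀ hw0.ne'], ?_⟩
  intro y hy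
  rw [real_inner_smul_right, inv_mul_le_iff₀ hw0, ← hw]
  have h3 : f x ≤ ‖x‖ * ‖w‖ := by rw [hw]; exact real_inner_le_norm _ _
  linarith [h1 y hy, mul_comm ‖x‖ ‖w‖]

/-! ### Normalized symmetrization steps -/

/-- Convex bodies with the origin in the interior and hyperbolic mass `m`. -/
structure IsBody (n : ℕ) (m : ℝ) (K : Set (E n)) : Prop where
  compact : IsCompact K
  convex : Convex ℝ K
  zero_mem : (0 : E n) ∈ interior K
  mass : mH n K = m

/-- `K'` is obtained from `K` by one Steiner symmetrization followed by a contraction. -/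
def NStep (n : ℕ) (K K' : Set (E n)) : Prop :=
  ∃ (u : E n) (r : ℝ), ‖u‖ = 1 ∧ r ∈ Ioc (0 : ℝ) 1 ∧ K' = r • steiner u K

/-- `SuppLE K V c`: the support function of `K` is at most `c` on the set of directions `V`. -/
def SuppLE {n : ℕ} (K V : Set (E n)) (c : ℝ) : Prop := ∀ w ∈ V, ∀ y ∈ K, ⟪y, w⟫ ≤ c

lemma IsBody.mass_pos {n : ℕ} {m : ℝ} {K : Set (E n)} (hK : IsBody n m K) : 0 < m := by
  obtain ⟨ε, hε, hb⟩ := Metric.nhds_basis_closedBall.mem_iff.1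
    (mem_interior_iff_mem_nhds.1 hK.zero_mem)
  rw [← hK.mass]
  exact (mH_closedBall_pos 0 hε).trans_le (mH_mono hK.compact hb)

lemma exists_nstep {n : ℕ} (hn : 2 ≤ n) {m : ℝ} {K : Set (E n)} (hK : IsBody n m K) {u : E n}
    (hu : ‖u‖ = 1) : ∃ r ∈ Ioc (0 : ℝ) 1, IsBody n m (r • steiner u K) := by
  have hS := isCompact_steiner hu hK.compact hK.convex
  obtain ⟨r, hr, hrm⟩ := exists_dilation hn hS hK.mass_pos
    (hK.mass ▸ mH_le_mH_steiner hu hK.compact hK.convex)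
  refine ⟨r, hr, hS.smul r, (convex_steiner hu hK.compact hK.convex).smul r, ?_, hrm⟩
  rw [interior_smul₀ hr.1.ne']
  exact ⟨0, zero_mem_interior_steiner hu hK.compact hK.convex hK.zero_mem, smul_zero r⟩

/-- If the support function is at most `c` on `V` and at most `d` on the reflection of `V` in
`u^⊥`, then after a step in direction `u` it is at most `(c + d) / 2` on `V`. The contraction is
harmless because these bounds are nonnegative. -/
lemma suppLE_step {n : ℕ} {m : ℝ} {K : Set (E n)} (hK : IsBody n m K) {u : E n} (hu : ‖u‖ = 1)
    {r : ℝ} (hr : r ∈ Ioc (0 : ℝ) 1) {V : Set (E n)} {c d : ℝ} (hc : SuppLE K V c)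
    (hd : ∀ w ∈ V, ∀ y ∈ K, ⟪y, w - (2 * ⟪w, u⟫) • u⟫ ≤ d) :
    SuppLE (r • steiner u K) V ((c + d) / 2) := by
  rintro w hw _ ⟨x, hx, rfl⟩
  have h0 := interior_subset hK.zero_mem
  have hcw := hc w hw 0 h0
  have hdw := hd w hw 0 h0
  rw [inner_zero_left] at hcw hdw
  have := inner_le_of_mem_steiner hu hK.compact hK.convex (hc w hw) (hd w hw) x hx
  simp only [real_inner_smul_left]
  nlinarith [hr.1, hr.2, mul_le_mul_of_nonneg_left this hr.1.le]

/-- A bound for the support function on all unit directions is a bound for the circumradius. -/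
lemma suppLE_sphere_iff {n : ℕ} {K : Set (E n)} {c : ℝ} (hc : 0 ≤ c) :
    SuppLE K (sphere 0 1) c ↔ K ⊆ closedBall 0 c := by
  constructor
  · intro h y hy
    rw [mem_closedBall_zero_iff]
    rcases eq_or_ne y 0 with rfl | hy0
    · simpa using hc
    have hn := norm_pos_iff.2 hy0
    have := h (‖y‖⁻¹ • y) (by
      rw [mem_sphere_zero_iff_norm, norm_smul, norm_inv, norm_norm, inv_mul_cancel₀ hn.ne']) y hy
    rwa [real_inner_smul_right, real_inner_self_eq_norm_sq, sq, inv_mul_cancel_left₀ hn.ne'] at this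
  · intro h w hw y hy
    have h1 := mem_closedBall_zero_iff.1 (h hy)
    have h2 := real_inner_le_norm y w
    rw [mem_sphere_zero_iff_norm.1 hw, mul_one] at h2
    exact h2.trans h1

lemma norm_reflect {n : ℕ} {u : E n} (hu : ‖u‖ = 1) (w : E n) :
    ‖w - (2 * ⟪w, u⟫) • u‖ = ‖w‖ := by
  rw [← sq_eq_sq₀ (norm_nonneg _) (norm_nonneg _), norm_sub_sq_real, real_inner_smul_right,
    norm_smul, hu, Real.norm_eq_abs, mul_pow, sq_abs]
  ring

/-! ### Shrinking the circumscribed ball -/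

/-- The type of convex bodies in `ℝⁿ` with the origin in the interior and hyperbolic mass `m`. -/
abbrev Body (n : ℕ) (m : ℝ) := {K : Set (E n) // IsBody n m K}

/-- The relation `NStep` on `Body n m`. -/
def Next {n : ℕ} {m : ℝ} (a b : Body n m) : Prop := NStep n a.1 b.1

lemma Next.subset_closedBall {n : ℕ} {m : ℝ} {a b : Body n m} (h : Next a b) {c : ℝ}
    (ha : a.1 ⊆ closedBall 0 c) : b.1 ⊆ closedBall 0 c := by
  obtain ⟨u, r, hu, hr, hb⟩ := h
  have hc : 0 ≤ c := by
    have := ha (interior_subset a.2.zero_mem)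
    simpa using this
  rw [← suppLE_sphere_iff hc] at ha ⊢
  rw [hb]
  have := suppLE_step a.2 hu hr ha (d := c) fun w hw => ha _ (by
    rw [mem_sphere_zero_iff_norm] at hw ⊢; rw [norm_reflect hu, hw])
  rwa [add_self_div_two] at this

/-- The cap of unit directions at distance less than `η` from `y`. -/
def cap {n : ℕ} (y : E n) (η : ℝ) : Set (E n) := {w | ‖w‖ = 1 ∧ ‖w - y‖ < η}

/-- A deficit `δ` of the support function on one cap is spread, by one reflection for each `y ∈ l`,
to the caps around all points of `l`; each step at most halves the deficit. -/
lemma exists_spread {n : ℕ} (hn : 2 ≤ n) {m : ℝ} (a : Body n m) {ρ δ η : ℝ} (hδ : 0 ≤ δ)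
    (ha : SuppLE a.1 (sphere 0 1) ρ) {v : E n} (hv : ‖v‖ = 1)
    (hcap : SuppLE a.1 (cap v η) (ρ - δ)) (l : List (E n)) (hl : ∀ y ∈ l, ‖y‖ = 1) :
    ∃ b : Body n m, Relation.ReflTransGen Next a b ∧ SuppLE b.1 (sphere 0 1) ρ ∧
      SuppLE b.1 (cap v η) (ρ - δ / 2 ^ l.length) ∧
      ∀ y ∈ l, SuppLE b.1 (cap y η) (ρ - δ / 2 ^ l.length) := by
  induction l with
  | nil => exact ⟨a, .refl, ha, by simpa using hcap, by simp⟩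
  | cons y l ih =>
    obtain ⟨b, hab, hb, hbv, hbl⟩ := ih fun z hz => hl z (List.mem_cons_of_mem _ hz)
    have hy : ‖y‖ = 1 := hl y List.mem_cons_self
    set q := δ / 2 ^ l.length with hq
    have hq0 : 0 ≤ q := by positivity
    have hq' : δ / 2 ^ (y :: l).length = q / 2 := by
      rw [List.length_cons, pow_succ, hq]; field_simp
    rw [hq']
    rcases eq_or_ne y v with rfl | hyv
    · have hw : ∀ V, SuppLE b.1 V (ρ - q) → SuppLE b.1 V (ρ - q / 2) := fun V h w hw z hz =>
        (h w hw z hz).trans (by linarith)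
      refine ⟨b, hab, hb, hw _ hbv, fun z hz => ?_⟩
      rcases List.mem_cons.1 hz with rfl | hz
      · exact hw _ hbv
      · exact hw _ (hbl z hz)
    -- The reflection in `u^⊥` exchanges `y` and `v`.
    have hd : 0 < ‖y - v‖ := norm_pos_iff.2 (sub_ne_zero.2 hyv)
    let u : E n := ‖y - v‖⁻¹ • (y - v)
    have hu : ‖u‖ = 1 := by
      simp only [u]; rw [norm_smul, norm_inv, norm_norm, inv_mul_cancel₀ hd.ne']
    have hrefl : y - (2 * ⟪y, u⟫) • u = v := by
      have h1 : ⟪y, u⟫ = ‖y - v‖⁻¹ * (1 - ⟪y, v⟫) := by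
        simp only [u]
        rw [real_inner_smul_right, inner_sub_right, real_inner_self_eq_norm_sq, hy]; norm_num
      have h2 : ‖y - v‖ ^ 2 = 2 * (1 - ⟪y, v⟫) := by
        rw [norm_sub_sq_real, hy, hv]; ring
      have h3 : (2 * ⟪y, u⟫) • u = y - v := by
        simp only [h1, u]
        rw [smul_smul]
        have : 2 * (‖y - v‖⁻¹ * (1 - ⟪y, v⟫)) * ‖y - v‖⁻¹ = 1 := by
          have : 1 - ⟪y, v⟫ = ‖y - v‖ ^ 2 / 2 := by linarith
          rw [this]; field_simp
        rw [this, one_smul]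
      rw [h3]; abel
    obtain ⟨r, hr, hB⟩ := exists_nstep hn b.2 hu
    have hs : ∀ w : E n, ‖w‖ = 1 → w - (2 * ⟪w, u⟫) • u ∈ sphere (0 : E n) 1 := fun w hw => by
      rw [mem_sphere_zero_iff_norm, norm_reflect hu, hw]
    have hkeep : ∀ z : E n, SuppLE b.1 (cap z η) (ρ - q) →
        SuppLE (r • steiner u b.1) (cap z η) (ρ - q / 2) := fun z h => by
      have := suppLE_step b.2 hu hr h (d := ρ) fun w hw => hb _ (hs w hw.1)
      convert this using 1; ring
    have hnext : Next b ⟨_, hB⟩ := ⟨u, r, hu, hr, rfl⟩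
    refine ⟨⟨_, hB⟩, hab.tail hnext, ?_, hkeep v hbv, fun z hz => ?_⟩
    · have := suppLE_step b.2 hu hr hb (d := ρ) fun w hw =>
        hb _ (hs w (mem_sphere_zero_iff_norm.1 hw))
      rwa [add_self_div_two] at this
    rcases List.mem_cons.1 hz with rfl | hz
    · have h1 : SuppLE b.1 (cap z η) ρ := fun w hw => hb w (mem_sphere_zero_iff_norm.2 hw.1)
      have := suppLE_step b.2 hu hr h1 (d := ρ - q) fun w hw => hbv _ ⟨by
        rw [norm_reflect hu, hw.1], by
        have e : w - (2 * ⟪w, u⟫) • u - v = (w - z) - (2 * ⟪w - z, u⟫) • u := by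
          nth_rewrite 1 [← hrefl]
          rw [inner_sub_left]; module
        rw [e, norm_reflect hu]; exact hw.2⟩
      convert this using 1; ring
    · exact hkeep z (hbl z hz)

lemma nontrivial_E {n : ℕ} (hn : 2 ≤ n) : Nontrivial (E n) := by
  apply Module.nontrivial_of_finrank_pos (R := ℝ)
  rw [finrank_euclideanSpace, Fintype.card_fin]; omega

lemma mH_closedBall_strictMono {n : ℕ} (hn : 2 ≤ n) {r s : ℝ} (hr : 0 ≤ r) (hrs : r < s) :
    mH n (closedBall (0 : E n) r) < mH n (closedBall (0 : E n) s) := by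
  have := nontrivial_E hn
  obtain ⟨z, hz⟩ := exists_norm_eq (E n) (show 0 ≤ (r + s) / 2 by linarith)
  have h := mH_add_le (n := n) (A := closedBall 0 r) (B := closedBall z ((s - r) / 4))
    (L := closedBall 0 s) isClosed_closedBall.measurableSet (isCompact_closedBall _ _)
    (closedBall_subset_closedBall hrs.le)
    (closedBall_subset_closedBall' (by rw [dist_zero_right, hz]; linarith))
    (closedBall_disjoint_closedBall (by rw [dist_zero_left, hz]; linarith))
  linarith [mH_closedBall_pos z (show 0 < (s - r) / 4 by linarith)]

/-- A body of the same mass as `B(0,R)` inside a ball of radius `ρ ≥ R + ε` can be brought, in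
finitely many steps, into a ball whose radius is smaller by a uniform amount. -/
lemma exists_shrink {n : ℕ} (hn : 2 ≤ n) {R : ℝ} (hR : 0 < R) {ε ρ₀ : ℝ} (hε : 0 < ε)
    (hρ₀ : 0 < ρ₀) : ∃ δ > 0, ∀ (a : Body n (mH n (closedBall (0 : E n) R))) (ρ : ℝ),
      R + ε ≤ ρ → ρ ≤ ρ₀ → a.1 ⊆ closedBall 0 ρ →
      ∃ b, Relation.ReflTransGen Next a b ∧ b.1 ⊆ closedBall 0 (ρ - δ) := by
  have hη : 0 < ε / (4 * ρ₀) := by positivity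
  obtain ⟨t, hts, htf, htc⟩ := finite_cover_balls_of_compact (isCompact_sphere (0 : E n) 1) hη
  let l := htf.toFinset.toList
  have hl : ∀ y, y ∈ l ↔ y ∈ t := fun y => by simp [l]
  refine ⟨ε / 4 / 2 ^ l.length, by positivity, fun a ρ h1 h2 ha => ?_⟩
  have hx : ∃ x ∈ closedBall (0 : E n) (R + ε / 2), x ∉ a.1 := by
    by_contra! h
    have h3 := mH_mono a.2.compact h
    rw [a.2.mass] at h3
    exact absurd h3 (mH_closedBall_strictMono hn hR.le (by linarith)).not_ge
  obtain ⟨x, hxR, hxa⟩ := hx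
  rw [mem_closedBall_zero_iff] at hxR
  obtain ⟨v, hv, hva⟩ := exists_separating a.2.compact a.2.convex
    (interior_subset a.2.zero_mem) hxa
  have hρ : 0 ≤ ρ := by linarith
  have hcap : SuppLE a.1 (cap v (ε / (4 * ρ₀))) (ρ - ε / 4) := by
    intro w hw y hy
    have e : ⟪y, w⟫ = ⟪y, v⟫ + ⟪y, w - v⟫ := by rw [inner_sub_right]; ring
    have h3 : ⟪y, w - v⟫ ≤ ρ₀ * (ε / (4 * ρ₀)) := by
      refine (real_inner_le_norm _ _).trans ?_
      have := mem_closedBall_zero_iff.1 (ha hy)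
      exact mul_le_mul (this.trans h2) hw.2.le (norm_nonneg _) hρ₀.le
    have h4 : ρ₀ * (ε / (4 * ρ₀)) = ε / 4 := by field_simp
    linarith [hva y hy]
  obtain ⟨b, hab, -, -, hb⟩ := exists_spread hn a (by positivity)
    ((suppLE_sphere_iff hρ).2 ha) hv hcap l
    (fun y hy => mem_sphere_zero_iff_norm.1 (hts ((hl y).1 hy)))
  refine ⟨b, hab, (suppLE_sphere_iff ?_).1 fun w hw => ?_⟩
  · have : ε / 4 / 2 ^ l.length ≤ ε / 4 :=
      div_le_self (by positivity) (one_le_pow₀ one_le_two)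
    linarith
  · obtain ⟨y, hy, hwy⟩ := mem_iUnion₂.1 (htc hw)
    exact hb y ((hl y).2 hy) w ⟨mem_sphere_zero_iff_norm.1 hw, by rwa [← dist_eq_norm]⟩

/-- Iterating `exists_shrink` from any circumscribed ball reaches every `B(0,R+ε)`. -/
lemma exists_reach {n : ℕ} (hn : 2 ≤ n) {R : ℝ} (hR : 0 < R)
    (a : Body n (mH n (closedBall (0 : E n) R))) {ε : ℝ} (hε : 0 < ε) :
    ∃ b, Relation.ReflTransGen Next a b ∧ b.1 ⊆ closedBall 0 (R + ε) := by
  obtain ⟨ρ₀, hρ₀, ha⟩ := a.2.compact.isBounded.subset_closedBall_lt 0 0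
  obtain ⟨δ, hδ, h⟩ := exists_shrink hn hR hε hρ₀
  have key : ∀ k : ℕ, ∃ b, Relation.ReflTransGen Next a b ∧
      b.1 ⊆ closedBall 0 (max (R + ε) (ρ₀ - k * δ)) := by
    intro k
    induction k with
    | zero => exact ⟨a, .refl, ha.trans (closedBall_subset_closedBall (by simp))⟩
    | succ k ih =>
      obtain ⟨b, hab, hb⟩ := ih
      rcases le_total (ρ₀ - k * δ) (R + ε) with hk | hk
      · rw [max_eq_left hk] at hb
        exact ⟨b, hab, hb.trans (closedBall_subset_closedBall (le_max_left _ _))⟩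
      · rw [max_eq_right hk] at hb
        obtain ⟨c, hbc, hc⟩ := h b _ hk (by nlinarith [k.cast_nonneg (α := ℝ)]) hb
        refine ⟨c, hab.trans hbc, hc.trans (closedBall_subset_closedBall ?_)⟩
        refine le_trans (le_of_eq ?_) (le_max_right _ _)
        push_cast; ring
  obtain ⟨k, hk⟩ := exists_nat_gt (ρ₀ / δ)
  obtain ⟨b, hab, hb⟩ := key k
  rw [div_lt_iff₀ hδ] at hk
  rw [max_eq_left (by linarith)] at hb
  exact ⟨b, hab, hb⟩

/-! ### From finite chains to one infinite sequence -/

/-- `ReachIn step p d s`: from `s` the property `p` is reached in exactly `d` steps. -/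
def ReachIn {S : Type*} (step : S → S → Prop) (p : S → Prop) : ℕ → S → Prop
  | 0, s => p s
  | d + 1, s => ∃ s', step s s' ∧ ReachIn step p d s'

/-- If every property of a sequence `P 0, P 1, …` persists along steps and can be achieved from
anywhere in finitely many steps, then some infinite chain eventually has all of them: always step
along a shortest path to the first property that fails. -/
lemma exists_chain {S : Type*} (step : S → S → Prop) (P : ℕ → S → Prop)
    (hP : ∀ k s s', step s s' → P k s → P k s')
    (hreach : ∀ s k, ∃ s', Relation.ReflTransGen step s s' ∧ P k s')
    (hstep : ∀ s, ∃ s', step s s') (s₀ : S) :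
    ∃ f : ℕ → S, f 0 = s₀ ∧ (∀ i, step (f i) (f (i + 1))) ∧
      ∀ k, ∃ i, ∀ j ≥ i, P k (f j) := by
  classical
  let Q : ℕ → ℕ → S → Prop := fun k => ReachIn step (P k)
  have hQ : ∀ s k, ∃ d, Q k d s := by
    intro s k
    obtain ⟨s', h, hs'⟩ := hreach s k
    induction h using Relation.ReflTransGen.head_induction_on with
    | refl => exact ⟨0, hs'⟩
    | head hab _ ih =>
      obtain ⟨d, hd⟩ := ih
      exact ⟨d + 1, _, hab, hd⟩
  have hnext : ∀ s, ∃ s', step s s' ∧ ∀ k d, (∀ j < k, P j s) → ¬ P k s →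
      (∀ d' < d + 1, ¬ Q k d' s) → Q k (d + 1) s → Q k d s' := by
    intro s
    by_cases hall : ∀ k, P k s
    · obtain ⟨s', hs'⟩ := hstep s
      exact ⟨s', hs', fun k _ _ h => absurd (hall k) h⟩
    push Not at hall
    let k := Nat.find hall
    let d := Nat.find (hQ s k)
    have hd : Q k d s := Nat.find_spec (hQ s k)
    have hk : ¬ P k s := Nat.find_spec hall
    obtain ⟨e, he⟩ : ∃ e, d = e + 1 := Nat.exists_eq_succ_of_ne_zero fun h => by
      rw [h] at hd; exact hk hd
    rw [he] at hd
    obtain ⟨s', hs', hq⟩ := hd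
    refine ⟨s', hs', fun k' d' h1 h2 h3 h4 => ?_⟩
    have hkk : k' = k := by
      rcases lt_trichotomy k' k with h | h | h
      · exact absurd h2 (Nat.find_min hall h)
      · exact h
      · exact absurd (h1 k h) hk
    subst hkk
    have hdd : d = d' + 1 := (Nat.find_eq_iff (hQ s k)).2 ⟨h4, h3⟩
    have : d' = e := by omega
    rwa [this]
  choose g hg1 hg2 using hnext
  let f : ℕ → S := fun i => Nat.rec s₀ (fun _ s => g s) i
  have hf : ∀ i, step (f i) (f (i + 1)) := fun i => hg1 (f i)
  have hpers : ∀ k i j, i ≤ j → P k (f i) → P k (f j) := by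
    intro k i j hij h
    induction j, hij using Nat.le_induction with
    | base => exact h
    | succ j _ ih => exact hP k _ _ (hf j) ih
  have hreachk : ∀ k d i, (∀ j < k, P j (f i)) → Q k d (f i) → ∃ i', P k (f i') := by
    intro k d
    induction d using Nat.strong_induction_on with
    | _ d ih =>
      intro i hj hd
      by_cases hPk : P k (f i)
      · exact ⟨i, hPk⟩
      by_cases hmin : ∃ d' < d, Q k d' (f i)
      · obtain ⟨d', hd', hq⟩ := hmin
        exact ih d' hd' i hj hq
      push Not at hmin
      cases d with
      | zero => exact ⟨i, hd⟩
      | succ e =>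
        exact ih e e.lt_succ_self (i + 1) (fun j h => hP j _ _ (hf i) (hj j h))
          (hg2 (f i) k e hj hPk hmin hd)
  have hall : ∀ k, ∃ i, ∀ j < k, P j (f i) := by
    intro k
    induction k with
    | zero => exact ⟨0, fun j hj => absurd hj j.not_lt_zero⟩
    | succ k ih =>
      obtain ⟨i, hi⟩ := ih
      obtain ⟨d, hd⟩ := hQ (f i) k
      obtain ⟨i', hi'⟩ := hreachk k d i hi hd
      refine ⟨max i i', fun j hj => ?_⟩
      rcases Nat.lt_succ_iff_lt_or_eq.1 hj with h | rfl
      · exact hpers j i _ (le_max_left _ _) (hi j h)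
      · exact hpers j i' _ (le_max_right _ _) hi'
  refine ⟨f, rfl, hf, fun k => ?_⟩
  obtain ⟨i, hi⟩ := hall (k + 1)
  exact ⟨i, fun j hj => hpers k i j hj (hi k k.lt_succ_self)⟩

/-! ### Hausdorff convergence -/

/-- A lower bound for the mass of small balls inside `B(0,R)`, independent of the center. -/
lemma exists_mass_lower_bound {n : ℕ} (R : ℝ) {r : ℝ} (hr : 0 < r) :
    ∃ κ > 0, ∀ z : E n, ‖z‖ + r ≤ R → κ ≤ mH n (closedBall z r) := by
  let c : ℝ := (1 + R ^ 2) ^ (-(1 / 2 : ℝ))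
  have hc : 0 < c := Real.rpow_pos_of_pos (by positivity) _
  refine ⟨volume.real (closedBall (0 : E n) r) * c, ?_, fun z hz => ?_⟩
  · refine mul_pos (ENNReal.toReal_pos (measure_closedBall_pos _ _ hr).ne'
      (isCompact_closedBall _ _).measure_lt_top.ne) hc
  · rw [← Measure.addHaar_real_closedBall_center volume z r, ← smul_eq_mul, ← setIntegral_const,
      mH_eq]
    refine setIntegral_mono_on (integrableOn_const (isCompact_closedBall _ _).measure_lt_top.ne)
      (integrableOn_wt (isCompact_closedBall _ _)) isClosed_closedBall.measurableSet fun y hy => ?_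
    refine Real.rpow_le_rpow_of_nonpos (by positivity) ?_ (by norm_num)
    have : ‖y‖ ≤ R := by
      have h1 := norm_le_norm_add_norm_sub' y z
      rw [mem_closedBall, dist_eq_norm] at hy
      linarith
    gcongr

/-- A body with the mass of `B(0,R)` in a slightly larger ball contains a slightly smaller ball:
otherwise a half-space would cut off from `B(0,R)` too much mass. -/
lemma exists_contains_ball {n : ℕ} {R ε : ℝ} (hR : 0 < R) (hε : 0 < ε) :
    ∃ δ > 0, ∀ K : Set (E n), IsBody n (mH n (closedBall (0 : E n) R)) K →
      K ⊆ closedBall 0 (R + δ) → closedBall 0 (R - ε) ⊆ K := by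
  obtain ⟨κ, hκ, hz⟩ := exists_mass_lower_bound (n := n) R (show 0 < ε / 4 by positivity)
  obtain ⟨δ, hδ, hm⟩ := exists_ball_mass_lt (n := n) hR hκ
  refine ⟨δ, hδ, fun K hK hKs x hx => ?_⟩
  by_contra hxK
  obtain ⟨v, hv, hvK⟩ := exists_separating hK.compact hK.convex (interior_subset hK.zero_mem) hxK
  rw [mem_closedBall_zero_iff] at hx
  have hRε : 0 ≤ R - ε := (norm_nonneg x).trans hx
  have hzn : ‖(R - ε / 2) • v‖ = R - ε / 2 := by
    rw [norm_smul, hv, mul_one, Real.norm_of_nonneg (by linarith)]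
  have h1 := hz ((R - ε / 2) • v) (by rw [hzn]; linarith)
  have h2 := mH_add_le (n := n) (A := K) (B := closedBall ((R - ε / 2) • v) (ε / 4))
    isClosed_closedBall.measurableSet (isCompact_closedBall 0 (R + δ)) hKs
    (closedBall_subset_closedBall' (by rw [dist_zero_right, hzn]; linarith)) (by
      rw [Set.disjoint_left]
      intro y hy hyz
      rw [mem_closedBall, dist_eq_norm] at hyz
      have h3 := real_inner_le_norm ((R - ε / 2) • v - y) v
      rw [inner_sub_left, real_inner_smul_left, real_inner_self_eq_norm_sq, hv,
        norm_sub_rev] at h3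
      linarith [hvK y hy])
  rw [hK.mass] at h2
  linarith

lemma exists_near_closedBall {n : ℕ} {a b ε : ℝ} (hb : 0 < b) (hε : 0 ≤ ε) (hab : a ≤ b + ε)
    {x : E n} (hx : x ∈ closedBall (0 : E n) a) : ∃ y ∈ closedBall (0 : E n) b, dist x y ≤ ε := by
  rw [mem_closedBall_zero_iff] at hx
  rcases le_or_gt ‖x‖ b with h | h
  · exact ⟨x, mem_closedBall_zero_iff.2 h, by rwa [dist_self]⟩
  have hx0 : 0 < ‖x‖ := hb.trans h
  refine ⟨(b / ‖x‖) • x, ?_, ?_⟩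
  · rw [mem_closedBall_zero_iff, norm_smul, Real.norm_of_nonneg (by positivity),
      div_mul_cancel₀ _ hx0.ne']
  · have e : x - (b / ‖x‖) • x = (1 - b / ‖x‖) • x := by module
    have h1 : b / ‖x‖ ≤ 1 := (div_le_one hx0).2 h.le
    rw [dist_eq_norm, e, norm_smul, Real.norm_of_nonneg (by linarith), sub_mul,
      div_mul_cancel₀ _ hx0.ne']
    linarith

/-- Lemma 4.2, convergence of normalized hyperbolic Steiner
symmetrizations (stated in the model, convex case). -/
theorem steiner_convergence_mH (n : ℕ) (hn : 2 ≤ n) (C : Set (E n))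
    (hcomp : IsCompact C) (hconv : Convex ℝ C) (h0 : (0 : E n) ∈ interior C)
    (R : ℝ) (hR : 0 < R)
    (hvol : mH n (Metric.closedBall (0 : E n) R) = mH n C) :
    ∃ (u : ℕ → E n) (r : ℕ → ℝ) (D : ℕ → Set (E n)),
      (∀ i, ‖u i‖ = 1) ∧ (∀ i, r i ∈ Set.Ioc (0 : ℝ) 1) ∧
      D 0 = C ∧ (∀ i, D (i + 1) = r i • steiner (u i) (D i)) ∧
      (∀ i, mH n (D i) = mH n C) ∧
      Filter.Tendsto (fun i => Metric.hausdorffDist (D i) (Metric.closedBall (0 : E n) R))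
        Filter.atTop (nhds 0) := by
  have hC : IsBody n (mH n (closedBall (0 : E n) R)) C := ⟨hcomp, hconv, h0, hvol.symm⟩
  have := nontrivial_E hn
  obtain ⟨e, he⟩ := exists_norm_eq (E n) zero_le_one
  obtain ⟨f, hf0, hf, hfP⟩ := exists_chain (S := Body n (mH n (closedBall (0 : E n) R))) Next
    (fun k a => a.1 ⊆ closedBall 0 (R + 1 / ((k : ℝ) + 1)))
    (fun k a b h ha => h.subset_closedBall ha)
    (fun a k => exists_reach hn hR a (by positivity))
    (fun a => by
      obtain ⟨r, hr, hB⟩ := exists_nstep hn a.2 he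
      exact ⟨⟨_, hB⟩, e, r, he, hr, rfl⟩) ⟨C, hC⟩
  choose u r hu hr hD using hf
  refine ⟨u, r, fun i => (f i).1, hu, hr, congrArg Subtype.val hf0, hD, fun i => ?_, ?_⟩
  · rw [(f i).2.mass, hvol]
  rw [Metric.tendsto_atTop]
  intro ε hε
  -- `ε'` stays below `R` so that `B(0, R - ε')` is a genuine ball.
  set ε' := min (ε / 2) (R / 2) with hε'
  have hε'0 : 0 < ε' := lt_min (by positivity) (by positivity)
  have hε'1 : ε' ≤ ε / 2 := min_le_left _ _
  have hε'2 : ε' ≤ R / 2 := min_le_right _ _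
  obtain ⟨δ, hδ, hball⟩ := exists_contains_ball (n := n) hR hε'0
  obtain ⟨k, hk⟩ := exists_nat_one_div_lt (lt_min hδ hε'0)
  obtain ⟨i, hi⟩ := hfP k
  refine ⟨i, fun j hj => ?_⟩
  have hkδ := hk.le.trans (min_le_left _ _)
  have hkε := hk.le.trans (min_le_right _ _)
  have h1 := hball (f j).1 (f j).2
    ((hi j hj).trans (closedBall_subset_closedBall (by linarith)))
  rw [Real.dist_eq, sub_zero, abs_of_nonneg hausdorffDist_nonneg]
  refine lt_of_le_of_lt (hausdorffDist_le_of_mem_dist hε'0.le ?_ ?_)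
    (show ε' < ε by linarith)
  · exact fun x hx => exists_near_closedBall hR hε'0.le (by linarith) (hi j hj hx)
  · intro x hx
    obtain ⟨y, hy, hxy⟩ := exists_near_closedBall (b := R - ε') (by linarith) hε'0.le
      (by linarith) hx
    exact ⟨y, h1 hy, hxy⟩

end PPI
end
end

section
/- Steiner symmetrization inclusion for polar projection bodies (step in the proof of Lemma 3.6, convex case): Let n ≥ 2 and let C ⊂ ℝⁿ be a convex body with 0 in its interior. Then S_{e_n}(Π*C) ⊆ Π*(S_{e_n}C). -/
/-!
Write `h_D(y) = ‖y‖ H^{n-1}(D | y^⊥)` (`bright`). Up to a fixed normalization of Lebesgue measure,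
Fubini along `y` gives `V(D + [0, y]) ≥ V(D) + h_D(y)` for compact `D`, with equality for convex `D`
(`real_add_seg`). Everything follows from this formula.

For convex `C`, comparing the volumes of `C + [0, ε(y+z)]` and `C + [0, εy] + [0, εz]` as `ε → 0` shows
that `h_C` is subadditive (`bright_add_le`). By Hahn–Banach, `h_C` is then the support function of
`ΠC`, so `y ∈ Π*C` implies `h_C(y) ≤ 1` (`bright_le_one`).

For the symmetral, let `x' ⊥ e`. Comparing chords parallel to `e` one at a time gives
`2 V(S_e C + [0, x' + (b-a)/2 e]) ≤ V(C + [0, x' + b e]) + V(C + [0, x' + a e])`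
(`volume_chord_steiner_le`). As `V(C) ≤ V(S_e C)`, this yields
`2 h_{S_e C}(x' + (b-a)/2 e) ≤ h_C(x' + b e) + h_C(x' + a e)` (`bright_steiner_le`). A point of
`S_e(Π*C)` over `x'` has height `(b-a)/2` with `x' + a e, x' + b e ∈ Π*C`, because the chord of `Π*C`
over `x'` is closed and convex. So the right side is at most `2`, and the point lies in `Π*(S_e C)`.

The Hausdorff measure `μH` carries no normalizing constant, so volume is measured by the Haar measure
`mu e`, the product of `μH[n-1]` on `e^⊥` with length; this makes the volume formula exact.
-/

open MeasureTheory Set Metric Filter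
open scoped RealInnerProductSpace ENNReal NNReal Topology Pointwise

noncomputable section

namespace PPI

/-! ### Convex subsets of the line, segments and chords -/

/-- One-dimensional Brunn–Minkowski for an interval summand: the part of `K + [0, L]` to the right of
`max K` already contributes length `L`. -/
lemma volume_add_Icc_ge {K : Set ℝ} (hK : IsCompact K) (hne : K.Nonempty) {L : ℝ} (hL : 0 ≤ L) :
    volume K + ENNReal.ofReal L ≤ volume (K + Icc 0 L) := by
  have hb := hK.sSup_mem hne
  set b := sSup K with hbdef
  have hsub : K ∪ Ioc b (b + L) ⊆ K + Icc 0 L := by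
    rintro x (hx | hx)
    · exact ⟨x, hx, 0, ⟨le_rfl, hL⟩, add_zero x⟩
    · exact ⟨b, hb, x - b, ⟨by linarith [hx.1], by linarith [hx.2]⟩, by simp⟩
  have hdisj : Disjoint K (Ioc b (b + L)) := by
    rw [Set.disjoint_left]
    intro x hx hx'
    exact absurd (le_csSup hK.bddAbove hx) (not_le.2 hx'.1)
  calc volume K + ENNReal.ofReal L = volume (K ∪ Ioc b (b + L)) := by
        rw [measure_union hdisj measurableSet_Ioc, Real.volume_Ioc]; simp
    _ ≤ _ := measure_mono hsub

lemma volume_add_Icc_eq {K : Set ℝ} (hK : IsCompact K) (hne : K.Nonempty) (hc : Convex ℝ K)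
    {L : ℝ} (hL : 0 ≤ L) :
    volume (K + Icc 0 L) = volume K + ENNReal.ofReal L := by
  have h1 := eq_Icc_of_connected_compact ⟨hne, hc.isPreconnected⟩ hK
  have hab : sInf K ≤ sSup K := csInf_le_csSup hne hK.bddBelow hK.bddAbove
  rw [h1, Set.Icc_add_Icc hab hL, Real.volume_Icc, Real.volume_Icc,
    ← ENNReal.ofReal_add (by linarith) hL]
  congr 1; ring

/-- The segment `[0, y]`. -/
def seg {m : ℕ} (y : E m) : Set (E m) := (fun s : ℝ => s • y) '' Icc 0 1

lemma isCompact_seg {m : ℕ} (y : E m) : IsCompact (seg y) :=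
  isCompact_Icc.image (by fun_prop)

lemma convex_seg {m : ℕ} (y : E m) : Convex ℝ (seg y) :=
  (convex_Icc (0 : ℝ) 1).is_linear_image (IsLinearMap.isLinearMap_smul' y)

lemma isCompact_chord_s10 {m : ℕ} {e : E m} (he : ‖e‖ = 1) {D : Set (E m)} (hD : IsCompact D)
    (v : E m) : IsCompact (chord e D v) := by
  have : Topology.IsClosedEmbedding (fun t : ℝ => v + t • e) := by
    apply Isometry.isClosedEmbedding
    apply Isometry.of_dist_eq
    intro a b
    rw [dist_add_left, dist_eq_norm, ← sub_smul, norm_smul, he, mul_one, Real.dist_eq,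
      Real.norm_eq_abs]
  exact this.isCompact_preimage hD

lemma convex_chord {m : ℕ} (e : E m) {D : Set (E m)} (hD : Convex ℝ D)
    (v : E m) : Convex ℝ (chord e D v) := by
  intro a ha b hb p q hp hq hpq
  have := hD ha hb hp hq hpq
  change v + (p • a + q • b) • e ∈ D
  convert this using 1
  have hv : v = (p + q) • v := by rw [hpq, one_smul]
  nth_rewrite 1 [hv]
  simp only [smul_eq_mul]
  module

lemma chord_add_seg {m : ℕ} (e : E m) (D : Set (E m)) (v : E m) {L : ℝ} (hL : 0 ≤ L) :
    chord e (D + seg (L • e)) v = chord e D v + Icc 0 L := by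
  ext t
  constructor
  · rintro ⟨d, hd, _, ⟨s, hs, rfl⟩, h⟩
    refine ⟨t - s * L, ?_, s * L, ⟨mul_nonneg hs.1 hL, mul_le_of_le_one_left hL hs.2⟩, by simp⟩
    change v + (t - s * L) • e ∈ D
    have : v + (t - s * L) • e = d := by
      have h' : d = v + t • e - s • L • e := eq_sub_of_add_eq h
      rw [h']; module
    rwa [this]
  · rintro ⟨a, ha, r, hr, rfl⟩
    refine ⟨v + a • e, ha, r • e, ⟨r / L, ⟨div_nonneg hr.1 hL, div_le_one_of_le₀ hr.2 hL⟩, ?_⟩, ?_⟩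
    · rcases hL.eq_or_lt with h | h
      · have : r = 0 := le_antisymm (h ▸ hr.2) hr.1
        simp [this]
      · simp only [smul_smul]
        rw [div_mul_cancel₀ _ h.ne']
    · simp only; module

/-! ### Fubini along a direction -/

/-- The hyperplane `e^⊥`. -/
abbrev Hyp {m : ℕ} (e : E m) : Submodule ℝ (E m) := (ℝ ∙ e)ᗮ

lemma inner_hyp {m : ℕ} {e : E m} (v : Hyp e) : ⟪(v : E m), e⟫ = 0 :=
  Submodule.mem_orthogonal_singleton_iff_inner_left.1 v.2

/-- The orthogonal splitting `e^⊥ × ℝ ≃ ℝᵐ`, `(v, t) ↦ v + t e`. -/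
def split {m : ℕ} (e : E m) (he : ‖e‖ = 1) : (Hyp e × ℝ) ≃L[ℝ] E m :=
  LinearEquiv.toContinuousLinearEquiv
    { toFun := fun p => (p.1 : E m) + p.2 • e
      map_add' := fun p q => by simp only [Prod.fst_add, Prod.snd_add, Submodule.coe_add]; module
      map_smul' := fun c p => by simp [smul_smul]
      invFun := fun x => (⟨x - ⟪x, e⟫ • e, by
        rw [Submodule.mem_orthogonal_singleton_iff_inner_left, inner_sub_left,
          real_inner_smul_left, real_inner_self_eq_norm_sq, he]; ring⟩, ⟪x, e⟫)
      left_inv := fun p => by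
        have h : ⟪(p.1 : E m) + p.2 • e, e⟫ = p.2 := by
          rw [inner_add_left, inner_hyp, real_inner_smul_left, real_inner_self_eq_norm_sq, he]; ring
        ext1
        · apply Subtype.ext
          simp only [h]; simp
        · exact h
      right_inv := fun x => by simp }

@[simp] lemma split_apply {m : ℕ} (e : E m) (he : ‖e‖ = 1) (p : Hyp e × ℝ) :
    split e he p = (p.1 : E m) + p.2 • e := rfl

/-- The hyperplane measure `H^{m-1}` on `e^⊥`. -/
def hypMeas {m : ℕ} (e : E m) : Measure (Hyp e) := μH[(m : ℝ) - 1]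

/-- The dimension of `e^⊥` is `m - 1`, so `μH[m - 1]` is a Haar measure on it. -/
lemma hypMeas_haar {m : ℕ} {e : E m} (he : ‖e‖ = 1) : (hypMeas e).IsAddHaarMeasure := by
  have h0 : e ≠ 0 := by rintro rfl; simp at he
  have h1 : (Module.finrank ℝ (Hyp e) : ℝ) = (m : ℝ) - 1 := by
    have h := (ℝ ∙ e).finrank_add_finrank_orthogonal
    rw [finrank_span_singleton h0] at h
    have h2 : Module.finrank ℝ (E m) = m := by simp
    rw [h2] at h
    rw [eq_sub_iff_add_eq, add_comm]
    exact_mod_cast h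
  rw [hypMeas, ← h1]
  infer_instance

/-- The product of `H^{m-1}` on `e^⊥` and length on `ℝ e`. It is a Haar measure on `ℝᵐ`; with the
normalization of `μH` it need not be `volume`. -/
def mu {m : ℕ} (e : E m) (he : ‖e‖ = 1) : Measure (E m) :=
  ((hypMeas e).prod volume).map (split e he)

lemma mu_haar {m : ℕ} {e : E m} (he : ‖e‖ = 1) : (mu e he).IsAddHaarMeasure := by
  have := hypMeas_haar he
  exact (split e he).isAddHaarMeasure_map _

lemma mu_apply {m : ℕ} {e : E m} (he : ‖e‖ = 1) {D : Set (E m)} (hD : MeasurableSet D) :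
    mu e he D = ∫⁻ v : Hyp e, volume (chord e D v) ∂(hypMeas e) := by
  have := hypMeas_haar he
  rw [mu, Measure.map_apply (split e he).continuous.measurable hD,
    Measure.prod_apply ((split e he).continuous.measurable hD)]
  rfl

/-- A Haar measure is a multiple of `volume`, hence invariant under linear isometries. In particular
`mu e` does not favour the direction `e`. -/
lemma mu_image {m : ℕ} {e : E m} (he : ‖e‖ = 1) (R : E m ≃ₗᵢ[ℝ] E m) (D : Set (E m)) :
    mu e he (R '' D) = mu e he D := by
  have := mu_haar he
  rw [Measure.isAddLeftInvariant_eq_smul (mu e he) volume]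
  simp only [Measure.smul_apply]
  congr 1
  have h := (R.symm.measurePreserving).measure_preimage_equiv (f := R.symm.toMeasurableEquiv) D
  rw [← h]
  congr 1
  exact R.toEquiv.image_eq_preimage_symm D

/-- The shadow of `D` on `e^⊥`, as a subset of that subspace rather than of `ℝᵐ`. -/
def shad {m : ℕ} (e : E m) (D : Set (E m)) : Set (Hyp e) := {v | (chord e D v).Nonempty}

lemma shad_eq {m : ℕ} {e : E m} (he : ‖e‖ = 1) (D : Set (E m)) :
    shad e D = (fun x => ((split e he).symm x).1) '' D := by
  ext v
  constructor
  · rintro ⟨t, ht⟩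
    refine ⟨_, ht, ?_⟩
    have : (v : E m) + t • e = split e he (v, t) := rfl
    simp only [this, ContinuousLinearEquiv.symm_apply_apply]
  · rintro ⟨x, hx, rfl⟩
    refine ⟨((split e he).symm x).2, ?_⟩
    change split e he (((split e he).symm x).1, ((split e he).symm x).2) ∈ D
    simpa using hx

lemma isCompact_shad {m : ℕ} {e : E m} (he : ‖e‖ = 1) {D : Set (E m)} (hD : IsCompact D) :
    IsCompact (shad e D) := by
  rw [shad_eq he]
  exact hD.image (continuous_fst.comp (split e he).symm.continuous)

lemma hypMeas_shad {m : ℕ} {e : E m} (he : ‖e‖ = 1) (D : Set (E m)) :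
    hypMeas e (shad e D) = μH[(m : ℝ) - 1] (shadow e D) := by
  rw [hypMeas, ← (isometry_subtype_coe : Isometry ((↑) : Hyp e → E m)).hausdorffMeasure_image
    (Or.inl ?_), shad_eq he, image_image]
  · rfl
  · have hm : m ≠ 0 := by
      rintro rfl
      simp [Subsingleton.elim e 0] at he
    have : (1 : ℝ) ≤ m := by exact_mod_cast Nat.one_le_iff_ne_zero.2 hm
    linarith

/-- Each nonempty chord of `D` parallel to `e` gains length at least `L` when `[0, L e]` is added,
and exactly `L` when `D` is convex; integrate over the shadow. -/
lemma mu_add_seg_ge {m : ℕ} {e : E m} (he : ‖e‖ = 1) {D : Set (E m)} (hD : IsCompact D)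
    {L : ℝ} (hL : 0 ≤ L) :
    mu e he D + ENNReal.ofReal L * μH[(m : ℝ) - 1] (shadow e D) ≤ mu e he (D + seg (L • e)) ∧
    (Convex ℝ D →
      mu e he (D + seg (L • e)) =
        mu e he D + ENNReal.ofReal L * μH[(m : ℝ) - 1] (shadow e D)) := by
  have hS := (isCompact_shad he hD).measurableSet
  have key : mu e he D + ENNReal.ofReal L * μH[(m : ℝ) - 1] (shadow e D) =
      ∫⁻ v : Hyp e, (volume (chord e D v) +
        (shad e D).indicator (fun _ => ENNReal.ofReal L) v) ∂(hypMeas e) := by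
    rw [lintegral_add_right _ (measurable_const.indicator hS), lintegral_indicator hS,
      lintegral_const, Measure.restrict_apply_univ, mu_apply he hD.measurableSet, hypMeas_shad he]
  rw [key, mu_apply he (hD.add (isCompact_seg _)).measurableSet]
  simp only [chord_add_seg e D _ hL]
  constructor
  · refine lintegral_mono fun v => ?_
    by_cases hv : v ∈ shad e D
    · rw [indicator_of_mem hv]
      exact volume_add_Icc_ge (isCompact_chord_s10 he hD v) hv hL
    · rw [indicator_of_notMem hv]
      have : chord e D v = ∅ := not_nonempty_iff_eq_empty.1 hv
      simp [this]
  · intro hc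
    refine lintegral_congr fun v => ?_
    by_cases hv : v ∈ shad e D
    · rw [indicator_of_mem hv]
      exact volume_add_Icc_eq (isCompact_chord_s10 he hD v) hv (convex_chord e hc v) hL
    · rw [indicator_of_notMem hv]
      have : chord e D v = ∅ := not_nonempty_iff_eq_empty.1 hv
      simp [this]

lemma shadow_lt_top {m : ℕ} {e : E m} (he : ‖e‖ = 1) {D : Set (E m)} (hD : IsCompact D) :
    μH[(m : ℝ) - 1] (shadow e D) < ⊤ := by
  have := hypMeas_haar he
  rw [← hypMeas_shad he]
  exact (isCompact_shad he hD).measure_lt_top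

lemma exists_isom {m : ℕ} {e u : E m} (he : ‖e‖ = 1) (hu : ‖u‖ = 1) :
    ∃ R : E m ≃ₗᵢ[ℝ] E m, R e = u :=
  ⟨(ℝ ∙ (e - u))ᗮ.reflection, Submodule.reflection_sub (he.trans hu.symm)⟩

/-! ### The brightness function -/

lemma shadow_image {m : ℕ} (R : E m ≃ₗᵢ[ℝ] E m) (e : E m) (D : Set (E m)) :
    shadow (R e) (R '' D) = R '' shadow e D := by
  simp only [shadow, image_image]
  refine image_congr fun x _ => ?_
  simp

lemma seg_image {m : ℕ} (R : E m ≃ₗᵢ[ℝ] E m) (y : E m) : seg (R y) = R '' seg y := by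
  simp only [seg, image_image]
  refine image_congr fun x _ => ?_
  simp

/-- The brightness function `y ↦ ‖y‖ H^{m-1}(D | y^⊥)`, the 1-homogeneous extension of the function
defining `projBody`. It vanishes at `y = 0` because of the factor `‖y‖`. -/
def bright {m : ℕ} (D : Set (E m)) (y : E m) : ℝ :=
  ‖y‖ * (μH[(m : ℝ) - 1] (shadow (‖y‖⁻¹ • y) D)).toReal

/-- Adding `[0, y]` to a compact set increases its volume by at least its brightness at `y`, and by
exactly that much in the convex case. Volume is measured by `mu e` for any
fixed unit vector `e`; a linear isometry carries the direction of `y` to `e`. -/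
lemma real_add_seg {m : ℕ} {e : E m} (he : ‖e‖ = 1) {D : Set (E m)} (hD : IsCompact D)
    (y : E m) :
    (mu e he).real D + bright D y ≤ (mu e he).real (D + seg y) ∧
    (Convex ℝ D → (mu e he).real (D + seg y) = (mu e he).real D + bright D y) := by
  have := mu_haar he
  obtain ⟨u, hu, huy, hub⟩ : ∃ u : E m, ‖u‖ = 1 ∧ ‖y‖ • u = y ∧
      bright D y = ‖y‖ * (μH[(m : ℝ) - 1] (shadow u D)).toReal := by
    by_cases h : y = 0
    · exact ⟨e, he, by simp [h], by simp [h, bright]⟩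
    · have hy : ‖y‖ ≠ 0 := norm_ne_zero_iff.2 h
      exact ⟨‖y‖⁻¹ • y, by rw [norm_smul, norm_inv, norm_norm, inv_mul_cancel₀ hy],
        by rw [smul_smul, mul_inv_cancel₀ hy, one_smul], rfl⟩
  obtain ⟨R, hR⟩ := exists_isom he hu
  obtain ⟨D', rfl⟩ : ∃ D', D = R '' D' := ⟨R.symm '' D, by simp [image_image]⟩
  have hD' : IsCompact D' := by
    have := hD.image R.symm.continuous
    simpa [image_image] using this
  have e1 : R '' D' + seg y = R '' (D' + seg (‖y‖ • e)) := by
    rw [image_add, ← seg_image, map_smul, hR, huy]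
  have e2 : bright (R '' D') y = ‖y‖ * (μH[(m : ℝ) - 1] (shadow e D')).toReal := by
    rw [hub, ← hR, shadow_image, R.isometry.hausdorffMeasure_image (Or.inr R.surjective)]
  have e3 : ∀ A, (mu e he).real (R '' A) = (mu e he).real A := fun A => by
    simp only [Measure.real, mu_image]
  have e4 : (mu e he).real D' + ‖y‖ * (μH[(m : ℝ) - 1] (shadow e D')).toReal =
      (mu e he D' + ENNReal.ofReal ‖y‖ * μH[(m : ℝ) - 1] (shadow e D')).toReal := by
    rw [ENNReal.toReal_add hD'.measure_lt_top.ne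
      (ENNReal.mul_ne_top ENNReal.ofReal_ne_top (shadow_lt_top he hD').ne), ENNReal.toReal_mul,
      ENNReal.toReal_ofReal (norm_nonneg y)]
    rfl
  obtain ⟨h1, h2⟩ := mu_add_seg_ge he hD' (norm_nonneg y)
  rw [e1, e2, e3, e3, e4]
  refine ⟨ENNReal.toReal_mono (hD'.add (isCompact_seg _)).measure_lt_top.ne h1, fun hc => ?_⟩
  rw [Measure.real, h2]
  have := hc.linear_image R.symm.toLinearEquiv.toLinearMap
  simpa [image_image] using this

/-! ### Sublinearity and duality -/

lemma bright_smul {m : ℕ} (D : Set (E m)) (y : E m) {c : ℝ} (hc : 0 ≤ c) :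
    bright D (c • y) = c * bright D y := by
  rcases hc.eq_or_lt with rfl | hc
  · simp [bright]
  · have h : ‖c • y‖⁻¹ • c • y = ‖y‖⁻¹ • y := by
      rw [norm_smul, Real.norm_of_nonneg hc.le, smul_smul, mul_inv, mul_right_comm,
        inv_mul_cancel₀ hc.ne', one_mul]
    rw [bright, h, bright, norm_smul, Real.norm_of_nonneg hc.le, mul_assoc]

lemma bright_nonneg {m : ℕ} (D : Set (E m)) (y : E m) : 0 ≤ bright D y := by
  unfold bright; positivity

/-- Subadditivity: `C + [0, ε(y+z)] ⊆ C + [0, εy] + [0, εz]`. Comparing volumes gives the inequality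
up to an error `ε K`, since brightness of `C + [0, εy]` in direction `z` is affine in `ε`. -/
lemma bright_add_le {m : ℕ} {e : E m} (he : ‖e‖ = 1) {C : Set (E m)} (hC : IsCompact C)
    (hc : Convex ℝ C) (y z : E m) : bright C (y + z) ≤ bright C y + bright C z := by
  have := mu_haar he
  set K := bright (C + seg z) y - bright C y with hK
  have key : ∀ ε : ℝ, 0 < ε → bright C (y + z) ≤ bright C y + bright C z + ε * K := by
    intro ε hε
    have hD := hC.add (isCompact_seg (ε • y))
    have hDc := hc.add (convex_seg (ε • y))
    have a1 := (real_add_seg he hC (ε • (y + z))).2 hc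
    have a2 := (real_add_seg he hD (ε • z)).2 hDc
    have a3 := (real_add_seg he hD z).2 hDc
    have a4 := (real_add_seg he hC (ε • y)).2 hc
    have a5 := (real_add_seg he (hC.add (isCompact_seg z)) (ε • y)).2 (hc.add (convex_seg z))
    have a6 := (real_add_seg he hC z).2 hc
    rw [add_right_comm] at a3
    have hsub : C + seg (ε • (y + z)) ⊆ C + seg (ε • y) + seg (ε • z) := by
      rw [add_assoc]
      refine add_subset_add_left ?_
      rintro _ ⟨s, hs, rfl⟩
      exact ⟨_, ⟨s, hs, rfl⟩, _, ⟨s, hs, rfl⟩, by simp only [smul_add]⟩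
    have a7 : (mu e he).real (C + seg (ε • (y + z))) ≤
        (mu e he).real (C + seg (ε • y) + seg (ε • z)) :=
      measureReal_mono hsub (hD.add (isCompact_seg _)).measure_lt_top.ne
    rw [bright_smul _ _ hε.le] at a1 a2 a4 a5
    have hb : bright (C + seg (ε • y)) z = bright C z + ε * K := by
      rw [hK]; linarith
    rw [a1, a2, a4, hb] at a7
    have : ε * bright C (y + z) ≤ ε * (bright C y + bright C z + ε * K) := by linarith
    exact le_of_mul_le_mul_left this hε
  refine le_of_forall_pos_le_add fun δ hδ => ?_
  have hpos : 0 < |K| + 1 := by positivity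
  refine (key (δ / (|K| + 1)) (by positivity)).trans ?_
  have : δ / (|K| + 1) * K ≤ δ := by
    rw [div_mul_eq_mul_div, div_le_iff₀ hpos]
    exact mul_le_mul_of_nonneg_left (by linarith [le_abs_self K]) hδ.le
  linarith

lemma inner_le_bright {m : ℕ} {C : Set (E m)} {x : E m} (hx : x ∈ projBody m C) (y : E m) :
    ⟪x, y⟫ ≤ bright C y := by
  by_cases h : y = 0
  · simp [h, bright]
  · have hy : 0 < ‖y‖ := norm_pos_iff.2 h
    have h1 := hx (‖y‖⁻¹ • y) (by rw [norm_smul, norm_inv, norm_norm, inv_mul_cancel₀ hy.ne'])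
    rw [real_inner_smul_right] at h1
    calc ⟪x, y⟫ = ‖y‖ * (‖y‖⁻¹ * ⟪x, y⟫) := by rw [mul_inv_cancel_left₀ hy.ne']
      _ ≤ _ := mul_le_mul_of_nonneg_left h1 hy.le

/-- Brightness is sublinear, so by Hahn–Banach it is the support function of the projection body. -/
lemma bright_le_one {m : ℕ} {e : E m} (he : ‖e‖ = 1) {C : Set (E m)} (hC : IsCompact C)
    (hc : Convex ℝ C) {y : E m} (hy : y ∈ polarProjBody m C) : bright C y ≤ 1 := by
  by_cases h : y = 0
  · simp [h, bright]
  obtain ⟨g, hg1, hg2⟩ := exists_extension_of_le_sublinear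
    (LinearPMap.mkSpanSingleton (K := ℝ) y (bright C y) h) (bright C)
    (fun c hc' x => bright_smul C x hc'.le) (bright_add_le he hC hc) (by
      rintro ⟨x, hx⟩
      obtain ⟨c, rfl⟩ := Submodule.mem_span_singleton.1 hx
      refine (LinearPMap.mkSpanSingleton'_apply _ _ _ c hx).trans_le ?_
      change c * bright C y ≤ bright C (c • y)
      rcases le_total 0 c with h0 | h0
      · rw [bright_smul _ _ h0]
      · exact (mul_nonpos_of_nonpos_of_nonneg h0 (bright_nonneg _ _)).trans (bright_nonneg _ _))
  set x := (InnerProductSpace.toDual ℝ (E m)).symm (LinearMap.toContinuousLinearMap g) with hx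
  have hxg : ∀ z, ⟪x, z⟫ = g z := fun z => by
    rw [hx, InnerProductSpace.toDual_symm_apply]; rfl
  have hxP : x ∈ projBody m C := fun u hu => by
    rw [hxg]
    refine (hg2 u).trans_eq ?_
    simp [bright, hu]
  have h1 := hy x hxP
  rw [real_inner_comm, hxg] at h1
  have h2 := (hg1 ⟨y, Submodule.mem_span_singleton_self y⟩).trans
    (LinearPMap.mkSpanSingleton_apply ℝ ℝ h (bright C y))
  exact h2 ▸ h1

/-! ### Steiner symmetrization -/

lemma sub_le_volume {K : Set ℝ} (hK : IsCompact K) (hc : Convex ℝ K) {a b : ℝ} (ha : a ∈ K)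
    (hb : b ∈ K) : b - a ≤ (volume K).toReal := by
  have h := measure_mono (μ := volume) (hc.ordConnected.out ha hb)
  rw [Real.volume_Icc] at h
  have := ENNReal.toReal_mono hK.measure_lt_top.ne h
  exact (le_max_left _ _).trans (by rwa [ENNReal.toReal_ofReal'] at this)

lemma exists_endpoints {K : Set ℝ} (hK : IsCompact K) (hne : K.Nonempty) (hc : Convex ℝ K) :
    ∃ a ∈ K, ∃ b ∈ K, a ≤ b ∧ (volume K).toReal = b - a := by
  have h1 := eq_Icc_of_connected_compact ⟨hne, hc.isPreconnected⟩ hK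
  have hab : sInf K ≤ sSup K := csInf_le_csSup hne hK.bddBelow hK.bddAbove
  refine ⟨_, hK.sInf_mem hne, _, hK.sSup_mem hne, hab, ?_⟩
  rw [h1, Real.volume_Icc, csInf_Icc hab, csSup_Icc hab, ENNReal.toReal_ofReal (by linarith)]

lemma mem_steiner_iff_s10 {m : ℕ} {e : E m} (he : ‖e‖ = 1) {C : Set (E m)} (hC : IsCompact C)
    (hc : Convex ℝ C) (v : E m) (hv : ⟪v, e⟫ = 0) (t : ℝ) :
    v + t • e ∈ steiner e C ↔
      ∃ a ∈ chord e C v, ∃ b ∈ chord e C v, a ≤ b ∧ |t| ≤ (b - a) / 2 := by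
  constructor
  · rintro ⟨x', t', hx', h, hne, -, ht⟩
    have h1 : t = t' := by
      have := congrArg (fun z => ⟪z, e⟫) h
      simpa [inner_add_left, real_inner_smul_left, he, hv, hx'] using this
    subst h1
    obtain rfl := add_right_cancel h
    obtain ⟨a, ha, b, hb, hab, hl⟩ := exists_endpoints (isCompact_chord_s10 he hC _) hne
      (convex_chord e hc _)
    rw [hausdorffMeasure_real, hl] at ht
    exact ⟨a, ha, b, hb, hab, ht⟩
  · rintro ⟨a, ha, b, hb, hab, ht⟩
    have hK := isCompact_chord_s10 he hC v
    refine ⟨v, t, hv, rfl, ⟨a, ha⟩, ?_, ?_⟩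
    · rw [hausdorffMeasure_real]; exact hK.measure_lt_top
    · rw [hausdorffMeasure_real]
      linarith [sub_le_volume hK (convex_chord e hc v) ha hb]

/-- The symmetral is the continuous image of the compact set of triples `(c, d, σ)` with `c, d ∈ C` on a
common line parallel to `e` and `σ ∈ [-1, 1]`. -/
lemma isCompact_steiner_s10 {m : ℕ} {e : E m} (he : ‖e‖ = 1) {C : Set (E m)} (hC : IsCompact C)
    (hc : Convex ℝ C) : IsCompact (steiner e C) := by
  set T : Set (E m × E m × ℝ) := (C ×ˢ C ×ˢ Icc (-1 : ℝ) 1) ∩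
    {p | p.1 - ⟪p.1, e⟫ • e = p.2.1 - ⟪p.2.1, e⟫ • e} with hT
  have hTc : IsCompact T := (hC.prod (hC.prod isCompact_Icc)).inter_right
    (isClosed_eq (by fun_prop) (by fun_prop))
  have hperp : ∀ c : E m, ⟪c - ⟪c, e⟫ • e, e⟫ = 0 := fun c => by
    rw [inner_sub_left, real_inner_smul_left, real_inner_self_eq_norm_sq, he]; ring
  have himg : steiner e C = (fun p : E m × E m × ℝ => (p.1 - ⟪p.1, e⟫ • e) +
      (p.2.2 * (⟪p.1, e⟫ - ⟪p.2.1, e⟫) / 2) • e) '' T := by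
    ext x
    constructor
    · intro hx
      obtain ⟨v, t, hv, rfl, -⟩ := id hx
      obtain ⟨a, ha, b, hb, hab, ht⟩ := (mem_steiner_iff_s10 he hC hc v hv t).1 hx
      have hin : ∀ r : ℝ, ⟪v + r • e, e⟫ = r := fun r => by
        simp [inner_add_left, real_inner_smul_left, he, hv]
      have ht' := abs_le.1 ht
      -- for a degenerate chord, `t = 0` and the quotient below is `0` by convention
      refine ⟨(v + b • e, v + a • e, 2 * t / (b - a)), ⟨⟨hb, ha, ?_⟩, ?_⟩, ?_⟩
      · rcases hab.eq_or_lt with h | h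
        · simp [h]
        · have : 0 < b - a := by linarith
          constructor
          · rw [le_div_iff₀ this]; linarith
          · rw [div_le_iff₀ this]; linarith
      · simp [hin]
      · simp only [hin]
        have : 2 * t / (b - a) * (b - a) / 2 = t := by
          rcases hab.eq_or_lt with h | h
          · subst h
            have : t = 0 := by linarith
            simp [this]
          · have : b - a ≠ 0 := by linarith
            field_simp
        rw [this]; module
    · rintro ⟨⟨c, d, σ⟩, ⟨⟨hc1, hd1, hσ⟩, heq⟩, rfl⟩
      simp only [mem_ofPred_eq] at heq hc1 hd1 hσ
      simp only
      rw [mem_steiner_iff_s10 he hC hc _ (hperp c)]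
      have h1 : ⟪c, e⟫ ∈ chord e C (c - ⟪c, e⟫ • e) := by simpa [chord] using hc1
      have h2 : ⟪d, e⟫ ∈ chord e C (c - ⟪c, e⟫ • e) := by rw [heq]; simpa [chord] using hd1
      have hσ' : |σ| ≤ 1 := abs_le.2 hσ
      have h3 : |σ * (⟪c, e⟫ - ⟪d, e⟫) / 2| ≤ |⟪c, e⟫ - ⟪d, e⟫| / 2 := by
        rw [abs_div, abs_mul, abs_two]
        have := mul_le_mul_of_nonneg_right hσ' (abs_nonneg (⟪c, e⟫ - ⟪d, e⟫))
        linarith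
      rcases le_total ⟪d, e⟫ ⟪c, e⟫ with h | h
      · refine ⟨_, h2, _, h1, h, h3.trans_eq ?_⟩
        rw [abs_of_nonneg (by linarith)]
      · refine ⟨_, h1, _, h2, h, h3.trans_eq ?_⟩
        rw [abs_of_nonpos (by linarith)]; ring
  rw [himg]
  exact hTc.image (by fun_prop)

lemma mu_le_steiner {m : ℕ} {e : E m} (he : ‖e‖ = 1) {C : Set (E m)} (hC : IsCompact C)
    (hc : Convex ℝ C) : mu e he C ≤ mu e he (steiner e C) := by
  rw [mu_apply he hC.measurableSet, mu_apply he (isCompact_steiner_s10 he hC hc).measurableSet]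
  refine lintegral_mono fun v => ?_
  rcases (chord e C (v : E m)).eq_empty_or_nonempty with h | h
  · simp [h]
  · have hK := isCompact_chord_s10 he hC (v : E m)
    obtain ⟨a, ha, b, hb, hab, hl⟩ := exists_endpoints hK h (convex_chord e hc _)
    have hsub : Icc (-((b - a) / 2)) ((b - a) / 2) ⊆ chord e (steiner e C) v := fun t ht =>
      (mem_steiner_iff_s10 he hC hc v (inner_hyp v) t).2 ⟨a, ha, b, hb, hab, abs_le.2 ht⟩
    calc volume (chord e C (v : E m)) = ENNReal.ofReal (b - a) := by
          rw [← hl, ENNReal.ofReal_toReal hK.measure_lt_top.ne]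
      _ = volume (Icc (-((b - a) / 2)) ((b - a) / 2)) := by
          rw [Real.volume_Icc]; congr 1; ring
      _ ≤ _ := measure_mono hsub

lemma add_mem_chord {m : ℕ} {e : E m} {C : Set (E m)} {v x' : E m} {s r : ℝ} (b : ℝ)
    (hs : s ∈ Icc (0 : ℝ) 1) (hr : r ∈ chord e C (v - s • x')) :
    r + s * b ∈ chord e (C + seg (x' + b • e)) v := by
  refine ⟨_, hr, _, ⟨s, hs, rfl⟩, ?_⟩
  simp only; module

/-- A point of `steiner e C + [0, x' + k e]` over `v` is at height `s k` plus a height of the symmetral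
over `v - s x'`. -/
lemma exists_of_mem_chord_steiner {m : ℕ} {e : E m} (he : ‖e‖ = 1) {C : Set (E m)}
    (hC : IsCompact C) (hc : Convex ℝ C) {v x' : E m} (hv : ⟪v, e⟫ = 0) (hx' : ⟪x', e⟫ = 0)
    {k β : ℝ} (hβ : β ∈ chord e (steiner e C + seg (x' + k • e)) v) :
    ∃ s ∈ Icc (0 : ℝ) 1, ∃ lo ∈ chord e C (v - s • x'), ∃ hi ∈ chord e C (v - s • x'),
      |β - s * k| ≤ (hi - lo) / 2 := by
  obtain ⟨d, hd, _, ⟨s, hs, rfl⟩, h⟩ := hβ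
  have hd' : d = (v - s • x') + (β - s * k) • e := by
    have : d = v + β • e - s • (x' + k • e) := eq_sub_of_add_eq h
    rw [this]; module
  rw [hd', mem_steiner_iff_s10 he hC hc _ (by simp [inner_sub_left, real_inner_smul_left, hv, hx'])]
    at hd
  obtain ⟨a, ha, b, hb, -, ht⟩ := hd
  exact ⟨s, hs, a, ha, b, hb, ht⟩

/-- The chordwise inequality. For chord points `β, α` coming from parameters `s, r` and chords
`[lo, hi]`, `[lo', hi']` of `C`, the four heights `hi + s b`, `lo' + r b` and `hi' + r a`, `lo + s a`
lie in the two chords on the right, and their differences add up to at least `2 (β - α)`. -/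
lemma volume_chord_steiner_le {m : ℕ} {e : E m} (he : ‖e‖ = 1) {C : Set (E m)}
    (hC : IsCompact C) (hc : Convex ℝ C) {v x' : E m} (hv : ⟪v, e⟫ = 0) (hx' : ⟪x', e⟫ = 0)
    (a b : ℝ) :
    2 * volume (chord e (steiner e C + seg (x' + ((b - a) / 2) • e)) v) ≤
      volume (chord e (C + seg (x' + b • e)) v) + volume (chord e (C + seg (x' + a • e)) v) := by
  have hP := isCompact_chord_s10 he (hC.add (isCompact_seg (x' + b • e))) v
  have hQ := isCompact_chord_s10 he (hC.add (isCompact_seg (x' + a • e))) v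
  have hPc := convex_chord e (hc.add (convex_seg (x' + b • e))) v
  have hQc := convex_chord e (hc.add (convex_seg (x' + a • e))) v
  set P := chord e (C + seg (x' + b • e)) v
  set Q := chord e (C + seg (x' + a • e)) v
  have key : ∀ α ∈ chord e (steiner e C + seg (x' + ((b - a) / 2) • e)) v,
      ∀ β ∈ chord e (steiner e C + seg (x' + ((b - a) / 2) • e)) v,
      β - α ≤ ((volume P).toReal + (volume Q).toReal) / 2 := by
    intro α hα β hβ
    obtain ⟨s, hs, lo, hlo, hi, hhi, h1⟩ := exists_of_mem_chord_steiner he hC hc hv hx' hβ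
    obtain ⟨r, hr, lo', hlo', hi', hhi', h2⟩ := exists_of_mem_chord_steiner he hC hc hv hx' hα
    have p := sub_le_volume hP hPc (add_mem_chord b hr hlo') (add_mem_chord b hs hhi)
    have q := sub_le_volume hQ hQc (add_mem_chord a hs hlo) (add_mem_chord a hr hhi')
    have h1' := (abs_le.1 h1).2
    have h2' := (abs_le.1 h2).1
    linarith
  have h1 : volume (chord e (steiner e C + seg (x' + ((b - a) / 2) • e)) v) ≤
      ENNReal.ofReal (((volume P).toReal + (volume Q).toReal) / 2) := by
    refine (Real.volume_le_diam _).trans (Metric.ediam_le fun α hα β hβ => ?_)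
    rw [edist_dist, Real.dist_eq]
    exact ENNReal.ofReal_le_ofReal (abs_le.2 ⟨by linarith [key α hα β hβ], key β hβ α hα⟩)
  calc _ ≤ 2 * ENNReal.ofReal (((volume P).toReal + (volume Q).toReal) / 2) := by gcongr
    _ = ENNReal.ofReal ((volume P).toReal + (volume Q).toReal) := by
        rw [← ENNReal.ofReal_ofNat, ← ENNReal.ofReal_mul (by norm_num)]
        congr 1; ring
    _ = _ := by
        rw [ENNReal.ofReal_add ENNReal.toReal_nonneg ENNReal.toReal_nonneg,
          ENNReal.ofReal_toReal hP.measure_lt_top.ne, ENNReal.ofReal_toReal hQ.measure_lt_top.ne]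

/-- Integrated over `e^⊥`, the chordwise inequality bounds the volume of the symmetral plus a
segment; subtract the volume of `C`, which the symmetral does not decrease. -/
lemma bright_steiner_le {m : ℕ} {e : E m} (he : ‖e‖ = 1) {C : Set (E m)}
    (hC : IsCompact C) (hc : Convex ℝ C) {x' : E m} (hx' : ⟪x', e⟫ = 0) (a b : ℝ) :
    2 * bright (steiner e C) (x' + ((b - a) / 2) • e) ≤
      bright C (x' + b • e) + bright C (x' + a • e) := by
  have := mu_haar he
  have hSC := isCompact_steiner_s10 he hC hc
  have hP := hC.add (isCompact_seg (x' + b • e))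
  have hQ := hC.add (isCompact_seg (x' + a • e))
  have hW := hSC.add (isCompact_seg (x' + ((b - a) / 2) • e))
  have h1 := (real_add_seg he hSC (x' + ((b - a) / 2) • e)).1
  have h2 := (real_add_seg he hC (x' + b • e)).2 hc
  have h3 := (real_add_seg he hC (x' + a • e)).2 hc
  have h4 : (mu e he).real C ≤ (mu e he).real (steiner e C) :=
    ENNReal.toReal_mono hSC.measure_lt_top.ne (mu_le_steiner he hC hc)
  have h5 : 2 * mu e he (steiner e C + seg (x' + ((b - a) / 2) • e)) ≤
      mu e he (C + seg (x' + b • e)) + mu e he (C + seg (x' + a • e)) := by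
    rw [mu_apply he hW.measurableSet, mu_apply he hP.measurableSet, mu_apply he hQ.measurableSet,
      ← lintegral_const_mul' _ _ (by simp)]
    refine (lintegral_mono fun v =>
      volume_chord_steiner_le he hC hc (inner_hyp v) hx' a b).trans_eq ?_
    refine lintegral_add_left ?_ _
    have := hypMeas_haar he
    exact measurable_measure_prodMk_left (ν := (volume : Measure ℝ))
      ((split e he).continuous.measurable hP.measurableSet)
  have h6 : 2 * (mu e he).real (steiner e C + seg (x' + ((b - a) / 2) • e)) ≤
      (mu e he).real (C + seg (x' + b • e)) + (mu e he).real (C + seg (x' + a • e)) := by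
    have := ENNReal.toReal_mono
      (ENNReal.add_ne_top.2 ⟨hP.measure_lt_top.ne, hQ.measure_lt_top.ne⟩) h5
    rw [ENNReal.toReal_add hP.measure_lt_top.ne hQ.measure_lt_top.ne, ENNReal.toReal_mul] at this
    simpa [Measure.real] using this
  linarith

/-! ### The inclusion -/

lemma exists_sub_eq {S : Set ℝ} (hcl : IsClosed S) (hc : Convex ℝ S) (hne : S.Nonempty) {t : ℝ}
    (ht0 : 0 ≤ t) (ht : t ≤ (volume S).toReal) :
    ∃ a ∈ S, ∃ b ∈ S, b - a = t := by
  have hoc := hc.ordConnected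
  suffices h : ∃ a ∈ S, ∃ b ∈ S, t ≤ b - a by
    obtain ⟨a, ha, b, hb, hab⟩ := h
    exact ⟨a, ha, a + t, hoc.out ha hb ⟨by linarith, by linarith⟩, by ring⟩
  obtain ⟨x, hx⟩ := hne
  by_cases hA : BddAbove S
  · by_cases hB : BddBelow S
    · refine ⟨_, hcl.csInf_mem ⟨x, hx⟩ hB, _, hcl.csSup_mem ⟨x, hx⟩ hA, ht.trans ?_⟩
      have h1 := measure_mono (μ := volume) (subset_Icc_csInf_csSup hB hA)
      rw [Real.volume_Icc] at h1
      exact ENNReal.toReal_le_of_le_ofReal (sub_nonneg.2 (csInf_le_csSup ⟨x, hx⟩ hB hA)) h1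
    · obtain ⟨y, hy, hyx⟩ := not_bddBelow_iff.1 hB (x - t)
      exact ⟨y, hy, x, hx, by linarith⟩
  · obtain ⟨y, hy, hyx⟩ := not_bddAbove_iff.1 hA (x + t)
    exact ⟨x, hx, y, hy, by linarith⟩

lemma polarSet_eq {m : ℕ} (A : Set (E m)) : polarSet A = ⋂ x ∈ A, {y | ⟪y, x⟫ ≤ 1} := by
  ext; simp [polarSet]

lemma convex_polarSet {m : ℕ} (A : Set (E m)) : Convex ℝ (polarSet A) := by
  rw [polarSet_eq]
  refine convex_iInter₂ fun x _ => convex_halfSpace_le (f := fun y : E m => ⟪y, x⟫) ?_ 1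
  exact ⟨fun y z => inner_add_left _ _ _, fun c y => real_inner_smul_left _ _ _⟩

lemma isClosed_polarSet {m : ℕ} (A : Set (E m)) : IsClosed (polarSet A) := by
  rw [polarSet_eq]
  exact isClosed_biInter fun x _ => isClosed_le (by fun_prop) continuous_const

lemma steiner_polar_subset {m : ℕ} {e : E m} (he : ‖e‖ = 1) {C : Set (E m)}
    (hC : IsCompact C) (hc : Convex ℝ C) :
    steiner e (polarProjBody m C) ⊆ polarProjBody m (steiner e C) := by
  rintro _ ⟨x', t, hx', rfl, hne, -, ht⟩
  rw [hausdorffMeasure_real] at ht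
  have hcl : IsClosed (chord e (polarProjBody m C) x') :=
    (isClosed_polarSet (projBody m C)).preimage (f := fun t : ℝ => x' + t • e) (by fun_prop)
  have hcv : Convex ℝ (chord e (polarProjBody m C) x') :=
    convex_chord e (convex_polarSet (projBody m C)) x'
  obtain ⟨a, ha, b, hb, hab⟩ : ∃ a ∈ chord e (polarProjBody m C) x',
      ∃ b ∈ chord e (polarProjBody m C) x', b - a = 2 * t := by
    obtain ⟨a, ha, b, hb, hab⟩ := exists_sub_eq hcl hcv hne (t := 2 * |t|) (by positivity)
      (by linarith)
    rcases le_total 0 t with h | h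
    · exact ⟨a, ha, b, hb, by rw [hab, abs_of_nonneg h]⟩
    · exact ⟨b, hb, a, ha, by rw [abs_of_nonpos h] at hab; linarith⟩
  obtain rfl : t = (b - a) / 2 := by linarith
  intro x hx
  have h1 := inner_le_bright hx (x' + ((b - a) / 2) • e)
  have h2 := bright_steiner_le he hC hc hx' a b
  have h3 := bright_le_one he hC hc ha
  have h4 := bright_le_one he hC hc hb
  rw [real_inner_comm]
  linarith

/-- Steiner symmetrization inclusion for polar projection bodies,
`S_{e_n}(Π*C) ⊆ Π*(S_{e_n}C)`. -/
theorem steiner_polarProjBody_subset (n : ℕ) (hn : 2 ≤ n) (C : Set (E n))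
    (hcomp : IsCompact C) (hconv : Convex ℝ C) (h0 : (0 : E n) ∈ interior C) :
    steiner (EuclideanSpace.single (⟨n - 1, by omega⟩ : Fin n) (1 : ℝ)) (polarProjBody n C) ⊆
      polarProjBody n (steiner (EuclideanSpace.single (⟨n - 1, by omega⟩ : Fin n) (1 : ℝ)) C) :=
  steiner_polar_subset (by simp) hcomp hconv

end PPI
end
end

section
/- Lemma 3.4 (continuity of the spherical projection operator, convex case): Let n ≥ 2 and let K_0, K_1, K_2, … ∈ K_o(S^n_+) be spherical convex bodies such that K_i → K_0 in Hausdorff distance (as compact subsets of ℝ^{n+1}; equivalently in the spherical Hausdorff distance induced by the geodesic metric d_s(u,v) = arccos(u·v)). Then Π_S K_i → Π_S K_0 in Hausdorff distance. -/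
/-!
Write `L i = g(K i)`. The sets `K i` eventually lie in a compact part of the open hemisphere, where
`g` is uniformly continuous, so `L i → L 0` in the Hausdorff sense (`gmap_close`). As `L 0` is
convex with `0` in its interior, Hausdorff closeness of convex bodies gives dilates
`(1 - t) L 0 ⊆ L i ⊆ (1 + t) L 0` with `t → 0` (`smul_subset_of_close`, `subset_smul_of_close`).
The operator `Π` is monotone and homogeneous of degree `n - 1` (`projBody_mono`, `projBody_smul`),
whence `(1 - t)^(n-1) Π(L 0) ⊆ Π(L i) ⊆ (1 + t)^(n-1) Π(L 0)`. Since `Π(L 0)` is bounded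
(`projBody_bounded`), this forces `Π(L i) → Π(L 0)`, and `g⁻¹` is uniformly continuous on
bounded sets.
-/

open MeasureTheory Set Metric Filter
open scoped RealInnerProductSpace ENNReal NNReal Topology Pointwise

noncomputable section

namespace PPI

/-! ### Convex bodies that are close in the Hausdorff sense -/

/-- `A + t r B ⊆ A + t A = (1 + t) A` for a convex set `A` containing the ball `r B`. -/
theorem subset_smul_of_close {m : ℕ} {A B : Set (E m)} (hA : Convex ℝ A) {r t : ℝ}
    (ht : 0 < t) (hball : closedBall 0 r ⊆ A)
    (h : ∀ y ∈ B, ∃ x ∈ A, dist y x ≤ t * r) : B ⊆ (1 + t) • A := by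
  intro y hy
  obtain ⟨x, hx, hd⟩ := h y hy
  have hz : t⁻¹ • (y - x) ∈ A := by
    apply hball
    rw [mem_closedBall_zero_iff, norm_smul, norm_inv, Real.norm_of_nonneg ht.le,
      ← dist_eq_norm, inv_mul_le_iff₀ ht]
    exact hd
  rw [hA.add_smul zero_le_one ht.le, one_smul]
  refine ⟨x, hx, y - x, ⟨_, hz, ?_⟩, by simp⟩
  exact smul_inv_smul₀ ht.ne' _

/-- If some `x = (1 - t) a` with `a ∈ A` were outside `B`, it could be strictly separated from
`B` by a functional `f`. Moving from `x` by `t r` in the direction of steepest ascent of `f`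
stays in `A`, and no point of `B` is within `t r` of the point reached. -/
theorem smul_subset_of_close {m : ℕ} {A B : Set (E m)} (hA : Convex ℝ A) (hB : Convex ℝ B)
    (hBc : IsClosed B) {r t : ℝ} (hr : 0 < r) (ht : 0 < t) (ht1 : t < 1)
    (hball : closedBall 0 r ⊆ A) (h : ∀ x ∈ A, ∃ y ∈ B, dist x y ≤ t * r) :
    (1 - t) • A ⊆ B := by
  rintro _ ⟨a, ha, rfl⟩
  by_contra hx
  obtain ⟨f, s, hfs, hsx⟩ := geometric_hahn_banach_closed_point hB hBc hx
  obtain ⟨v, rfl⟩ := (InnerProductSpace.toDual ℝ (E m)).surjective f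
  simp only [InnerProductSpace.toDual_apply_apply] at hfs hsx
  set w : E m := (r * ‖v‖⁻¹) • v with hw
  have hvne : ‖v‖ ≠ 0 := by
    intro hv
    rw [norm_eq_zero] at hv
    subst hv
    obtain ⟨y, hy, -⟩ := h a ha
    have := hfs y hy
    simp at this hsx
    linarith
  have hwA : w ∈ A := by
    apply hball
    rw [mem_closedBall_zero_iff, norm_smul, norm_mul, norm_inv, norm_norm,
      Real.norm_of_nonneg hr.le, mul_assoc, inv_mul_cancel₀ hvne, mul_one]
  have hmem : (1 - t) • a + t • w ∈ A := hA ha hwA (by linarith) ht.le (by ring)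
  obtain ⟨y, hy, hd⟩ := h _ hmem
  have h1 := hfs y hy
  have h2 : ⟪v, (1 - t) • a + t • w - y⟫ ≤ ‖v‖ * (t * r) :=
    (real_inner_le_norm _ _).trans
      (mul_le_mul_of_nonneg_left (by rwa [← dist_eq_norm]) (norm_nonneg _))
  have h3 : ⟪v, t • w⟫ = ‖v‖ * (t * r) := by
    rw [hw, inner_smul_right, inner_smul_right, real_inner_self_eq_norm_sq]
    field_simp
  rw [inner_sub_right, inner_add_right, h3] at h2
  linarith

/-! ### The projection body -/

theorem shadow_smul {m : ℕ} (u : E m) (c : ℝ) (C : Set (E m)) :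
    shadow u (c • C) = c • shadow u C := by
  unfold shadow
  ext x
  simp only [Set.mem_image, Set.mem_smul_set]
  constructor
  · rintro ⟨_, ⟨y, hy, rfl⟩, rfl⟩
    exact ⟨_, ⟨y, hy, rfl⟩, by rw [inner_smul_left, smul_sub, smul_smul]; rfl⟩
  · rintro ⟨_, ⟨y, hy, rfl⟩, rfl⟩
    exact ⟨_, ⟨y, hy, rfl⟩, by rw [inner_smul_left, smul_sub, smul_smul]; rfl⟩

/-- The shadow is a compact subset of the `(m - 1)`-dimensional space `u^⊥`, on which `H^{m-1}` is a
Haar measure. -/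
theorem hausdorff_shadow_lt_top {m : ℕ} (hm : 1 ≤ m) {u : E m} (hu : ‖u‖ = 1)
    {C : Set (E m)} (hC : IsCompact C) : μH[(m : ℝ) - 1] (shadow u C) < ⊤ := by
  have hu0 : u ≠ 0 := by
    rintro rfl
    simp at hu
  set V : Submodule ℝ (E m) := (ℝ ∙ u)ᗮ with hV
  have hfin : Module.finrank ℝ V = m - 1 := by
    have : Fact (Module.finrank ℝ (E m) = (m - 1) + 1) := ⟨by simp; omega⟩
    exact Submodule.finrank_orthogonal_span_singleton hu0
  have hcast : (m : ℝ) - 1 = (Module.finrank ℝ V : ℝ) := by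
    rw [hfin, Nat.cast_sub hm, Nat.cast_one]
  have hsc : IsCompact (shadow u C) := hC.image (by fun_prop)
  have hsub : shadow u C ⊆ (V : Set (E m)) := by
    rintro _ ⟨x, -, rfl⟩
    rw [SetLike.mem_coe, hV, Submodule.mem_orthogonal_singleton_iff_inner_right,
      inner_sub_right, inner_smul_right, real_inner_self_eq_norm_sq, hu, real_inner_comm]
    ring
  have hclosed : IsClosed (V : Set (E m)) := V.closed_of_finiteDimensional
  have hpre : IsCompact ((↑) ⁻¹' shadow u C : Set V) :=
    hclosed.isClosedEmbedding_subtypeVal.isCompact_preimage hsc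
  have himg : ((↑) : V → E m) '' ((↑) ⁻¹' shadow u C) = shadow u C := by
    exact Set.image_preimage_eq_of_subset fun x hx => ⟨⟨x, hsub hx⟩, rfl⟩
  rw [← himg, (isometry_subtype_coe).hausdorffMeasure_image
    (Or.inl (by rw [hcast]; positivity)), hcast]
  exact hpre.measure_lt_top

theorem projBody_mono {m : ℕ} (hm : 1 ≤ m) {C D : Set (E m)} (hD : IsCompact D) (h : C ⊆ D) :
    projBody m C ⊆ projBody m D := fun _ hx u hu =>
  (hx u hu).trans (ENNReal.toReal_mono (hausdorff_shadow_lt_top hm hu hD).ne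
    (measure_mono (Set.image_mono h)))

/-- The projection body is homogeneous of degree `m - 1`. -/
theorem projBody_smul {m : ℕ} (hm : 1 ≤ m) {c : ℝ} (hc : 0 < c) (C : Set (E m)) :
    projBody m (c • C) = (c ^ (m - 1)) • projBody m C := by
  have hcp : 0 < c ^ (m - 1) := pow_pos hc _
  have hd : (0 : ℝ) ≤ (m : ℝ) - 1 := by
    have : (1 : ℝ) ≤ m := by exact_mod_cast hm
    linarith
  ext x
  rw [Set.mem_smul_set_iff_inv_smul_mem₀ hcp.ne']
  unfold projBody
  simp only [Set.mem_ofPred_eq]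
  refine forall₂_congr fun u _ => ?_
  have hscale : (μH[(m : ℝ) - 1] (shadow u (c • C))).toReal =
      c ^ (m - 1) * (μH[(m : ℝ) - 1] (shadow u C)).toReal := by
    rw [shadow_smul, Measure.hausdorffMeasure_smul₀ hd hc.ne', ENNReal.smul_def, smul_eq_mul,
      ENNReal.toReal_mul]
    congr 1
    rw [ENNReal.coe_toReal]
    have : ((m : ℝ) - 1) = ((m - 1 : ℕ) : ℝ) := by rw [Nat.cast_sub hm, Nat.cast_one]
    rw [this]
    change ((‖c‖₊ ^ (((m - 1 : ℕ) : ℝ)) : ℝ≥0) : ℝ) = _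
    rw [NNReal.rpow_natCast]
    simp [abs_of_pos hc]
  rw [hscale, real_inner_smul_left, inv_mul_le_iff₀ hcp]

/-- Testing only the directions `± e_j` already bounds every coordinate. -/
theorem projBody_bounded (m : ℕ) (C : Set (E m)) : ∃ R, 0 < R ∧ ∀ x ∈ projBody m C, ‖x‖ ≤ R := by
  let M : Fin m → ℝ := fun j =>
    (μH[(m : ℝ) - 1] (shadow (EuclideanSpace.single j (1 : ℝ)) C)).toReal +
    (μH[(m : ℝ) - 1] (shadow (-EuclideanSpace.single j (1 : ℝ)) C)).toReal
  refine ⟨∑ j, M j + 1, ?_, fun x hx => ?_⟩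
  · have : 0 ≤ ∑ j, M j := Finset.sum_nonneg fun j _ => by positivity
    linarith
  have hj : ∀ j, |x j| ≤ M j := by
    intro j
    have h1 := hx (EuclideanSpace.single j (1 : ℝ)) (by simp)
    have h2 := hx (-EuclideanSpace.single j (1 : ℝ)) (by simp)
    rw [inner_neg_right] at h2
    simp only [EuclideanSpace.inner_single_right, one_mul, conj_trivial] at h1 h2
    rw [abs_le]
    have p1 : 0 ≤ (μH[(m : ℝ) - 1] (shadow (EuclideanSpace.single j (1 : ℝ)) C)).toReal :=
      ENNReal.toReal_nonneg
    have p2 : 0 ≤ (μH[(m : ℝ) - 1] (shadow (-EuclideanSpace.single j (1 : ℝ)) C)).toReal :=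
      ENNReal.toReal_nonneg
    constructor <;> simp only [M] <;> linarith
  have hx' : x = ∑ j, x j • EuclideanSpace.single j (1 : ℝ) := by
    ext k
    simp [Finset.sum_apply, Pi.single_apply]
  calc ‖x‖ = ‖∑ j, x j • EuclideanSpace.single j (1 : ℝ)‖ := by rw [← hx']
    _ ≤ ∑ j, ‖x j • EuclideanSpace.single j (1 : ℝ)‖ := norm_sum_le _ _
    _ = ∑ j, |x j| := by simp [norm_smul]
    _ ≤ ∑ j, M j := Finset.sum_le_sum fun j _ => hj j
    _ ≤ _ := by linarith

/-! ### The gnomonic projection -/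

theorem inner_eL (n : ℕ) (v : E (n + 1)) : ⟪v, eL n⟫ = v (Fin.last n) := by
  simp [eL, EuclideanSpace.inner_single_right]

theorem gmap_apply (n : ℕ) (v : E (n + 1)) (i : Fin n) :
    gmap n v i = v (Fin.castSucc i) / v (Fin.last n) := by
  rw [← inner_eL]
  rfl

theorem lift_castSucc (n : ℕ) (x : E n) (i : Fin n) : lift n x (Fin.castSucc i) = x i := by
  change (Fin.snoc (fun i => x i) 1 : Fin (n + 1) → ℝ) _ = _
  simp

theorem lift_last (n : ℕ) (x : E n) : lift n x (Fin.last n) = 1 := by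
  change (Fin.snoc (fun i => x i) 1 : Fin (n + 1) → ℝ) _ = _
  simp

theorem gmap_continuousOn (n : ℕ) : ContinuousOn (gmap n) {v | 0 < ⟪v, eL n⟫} := by
  unfold gmap
  refine (EuclideanSpace.equiv (Fin n) ℝ).symm.continuous.comp_continuousOn ?_
  refine continuousOn_pi.2 fun i => ?_
  refine ContinuousOn.div (by fun_prop) (by fun_prop) fun _ hv => ne_of_gt hv

theorem gInv_continuous (n : ℕ) : Continuous (gInv n) := by
  have hl : Continuous (lift n) := by
    unfold lift
    refine (EuclideanSpace.equiv (Fin (n + 1)) ℝ).symm.continuous.comp ?_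
    refine continuous_pi fun i => ?_
    refine Fin.lastCases ?_ (fun j => ?_) i
    · simpa using continuous_const
    · simp only [Fin.snoc_castSucc]
      fun_prop
  unfold gInv
  refine (hl.norm.inv₀ fun x => ?_).smul hl
  intro h
  rw [norm_eq_zero] at h
  have := lift_last n x
  rw [h] at this
  simp at this

theorem lift_gmap {n : ℕ} {v : E (n + 1)} (hv : 0 < v (Fin.last n)) :
    lift n (gmap n v) = (v (Fin.last n))⁻¹ • v := by
  ext i
  refine Fin.lastCases ?_ (fun j => ?_) i
  · rw [lift_last]
    simp [hv.ne']
  · rw [lift_castSucc, gmap_apply]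
    simp [div_eq_inv_mul]

theorem lift_comb {n : ℕ} (x y : E n) {a b : ℝ} (hab : a + b = 1) :
    lift n (a • x + b • y) = a • lift n x + b • lift n y := by
  ext i
  refine Fin.lastCases ?_ (fun j => ?_) i
  · simp [lift_last, hab]
  · simp [lift_castSucc]

/-- The gnomonic image is the slice of the convex radial extension at height one. -/
theorem IsSphConvexBody.convex_gmap {n : ℕ} {K : Set (E (n + 1))} (hK : IsSphConvexBody n K) :
    Convex ℝ (gmap n '' K) := by
  have hlast : ∀ v ∈ K, 0 < v (Fin.last n) := fun v hv => by
    rw [← inner_eL]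
    exact (hK.subset_upper hv).2
  rintro _ ⟨v, hv, rfl⟩ _ ⟨w, hw, rfl⟩ a b ha hb hab
  obtain ⟨r, -, z, hz, hrz⟩ := hK.radial_convex
    (⟨_, (inv_pos.2 (hlast v hv)).le, v, hv, rfl⟩) (⟨_, (inv_pos.2 (hlast w hw)).le, w, hw, rfl⟩)
    ha hb hab
  rw [← lift_gmap (hlast v hv), ← lift_gmap (hlast w hw), ← lift_comb _ _ hab] at hrz
  refine ⟨z, hz, ?_⟩
  have h1 : 1 = r * z (Fin.last n) := by
    rw [← lift_last n (a • gmap n v + b • gmap n w), hrz]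
    simp
  ext i
  rw [gmap_apply, ← lift_castSucc n (a • gmap n v + b • gmap n w), hrz,
    div_eq_iff (hlast z hz).ne']
  simp only [PiLp.smul_apply, smul_eq_mul]
  linear_combination (z (Fin.castSucc i)) * h1

theorem IsSphConvexBody.isBounded {n : ℕ} {K : Set (E (n + 1))} (hK : IsSphConvexBody n K) :
    Bornology.IsBounded K :=
  isBounded_closedBall.subset fun v hv =>
    mem_closedBall_zero_iff.2 (hK.subset_upper hv).1.le

theorem IsSphConvexBody.isCompact {n : ℕ} {K : Set (E (n + 1))} (hK : IsSphConvexBody n K) :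
    IsCompact K :=
  isCompact_of_isClosed_isBounded hK.closed hK.isBounded

theorem IsSphConvexBody.nonempty {n : ℕ} {K : Set (E (n + 1))} (hK : IsSphConvexBody n K) :
    K.Nonempty :=
  Set.image_nonempty.1 ⟨0, interior_subset hK.zero_mem_interior⟩

theorem IsSphConvexBody.isCompact_gmap {n : ℕ} {K : Set (E (n + 1))}
    (hK : IsSphConvexBody n K) : IsCompact (gmap n '' K) :=
  hK.isCompact.image_of_continuousOn
    ((gmap_continuousOn n).mono fun _ hv => (hK.subset_upper hv).2)

/-! ### Convergence -/

/-- A compact subset of the open hemisphere stays at positive height, so nearby sets lie in a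
common compact region on which the gnomonic projection is uniformly continuous. -/
theorem gmap_close (n : ℕ) (K : ℕ → Set (E (n + 1))) (hK : ∀ i, IsSphConvexBody n (K i))
    (hconv : Filter.Tendsto (fun i => Metric.hausdorffDist (K i) (K 0)) Filter.atTop (nhds 0))
    {δ : ℝ} (hδ : 0 < δ) :
    ∀ᶠ i in atTop, (∀ y ∈ gmap n '' K i, ∃ x ∈ gmap n '' K 0, dist y x ≤ δ) ∧
      (∀ x ∈ gmap n '' K 0, ∃ y ∈ gmap n '' K i, dist x y ≤ δ) := by
  obtain ⟨v₀, hv₀, hmin⟩ := (hK 0).isCompact.exists_isMinOn (hK 0).nonempty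
    (f := fun v => ⟪v, eL n⟫) (by fun_prop)
  set c := ⟪v₀, eL n⟫ with hc
  have hcpos : 0 < c := ((hK 0).subset_upper hv₀).2
  let S : Set (E (n + 1)) := closedBall 0 1 ∩ {v | c / 2 ≤ ⟪v, eL n⟫}
  have hS : IsCompact S := (isCompact_closedBall _ _).inter_right
    (isClosed_le continuous_const (by fun_prop))
  have hu : UniformContinuousOn (gmap n) S := hS.uniformContinuousOn_of_continuous
    ((gmap_continuousOn n).mono fun v hv => (half_pos hcpos).trans_le hv.2)
  obtain ⟨η, hη, hηd⟩ := Metric.uniformContinuousOn_iff_le.1 hu δ hδ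
  have h0S : K 0 ⊆ S := fun v hv =>
    ⟨mem_closedBall_zero_iff.2 ((hK 0).subset_upper hv).1.le, by
      have : c ≤ ⟪v, eL n⟫ := hmin hv
      change c / 2 ≤ _
      linarith⟩
  have hpos : 0 < min η (c / 2) := lt_min hη (half_pos hcpos)
  filter_upwards [hconv.eventually_lt_const hpos] with i hi
  have hne : hausdorffEDist (K i) (K 0) ≠ ⊤ := hausdorffEDist_ne_top_of_nonempty_of_bounded
    (hK i).nonempty (hK 0).nonempty (hK i).isBounded (hK 0).isBounded
  have key : ∀ v ∈ K i, v ∈ S := by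
    intro v hv
    obtain ⟨w, hw, hd⟩ := exists_dist_lt_of_hausdorffDist_lt hv hi hne
    refine ⟨mem_closedBall_zero_iff.2 ((hK i).subset_upper hv).1.le, ?_⟩
    have h1 : c ≤ ⟪w, eL n⟫ := hmin hw
    have h2 : ⟪w - v, eL n⟫ ≤ dist v w := by
      refine (real_inner_le_norm _ _).trans ?_
      rw [dist_comm, dist_eq_norm]
      simp [eL]
    rw [inner_sub_left] at h2
    have h3 := hd.trans_le (min_le_right _ _)
    change c / 2 ≤ _
    linarith
  constructor
  · rintro _ ⟨v, hv, rfl⟩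
    obtain ⟨w, hw, hd⟩ := exists_dist_lt_of_hausdorffDist_lt hv hi hne
    exact ⟨_, ⟨w, hw, rfl⟩, hηd _ (key v hv) _ (h0S hw) (hd.le.trans (min_le_left _ _))⟩
  · rintro _ ⟨w, hw, rfl⟩
    obtain ⟨v, hv, hd⟩ := exists_dist_lt_of_hausdorffDist_lt' hw hi hne
    exact ⟨_, ⟨v, hv, rfl⟩, hηd _ (h0S hw) _ (key v hv)
      ((dist_comm w v).le.trans (hd.le.trans (min_le_left _ _)))⟩

/-- Lemma 3.4, continuity of the spherical projection operator (convex case). -/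
theorem sphProjBody_continuous (n : ℕ) (hn : 2 ≤ n) (K : ℕ → Set (E (n + 1)))
    (hK : ∀ i, IsSphConvexBody n (K i))
    (hconv : Filter.Tendsto (fun i => Metric.hausdorffDist (K i) (K 0)) Filter.atTop (nhds 0)) :
    Filter.Tendsto (fun i => Metric.hausdorffDist (sphProjBody n (K i)) (sphProjBody n (K 0)))
      Filter.atTop (nhds 0) := by
  rw [Metric.tendsto_nhds]
  intro ε hε
  obtain ⟨R, hR, hbd⟩ := projBody_bounded n (gmap n '' K 0)
  obtain ⟨δ, hδ, hδd⟩ := Metric.uniformContinuousOn_iff_le.1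
    ((isCompact_closedBall (0 : E n) (R + 1)).uniformContinuousOn_of_continuous
      (gInv_continuous n).continuousOn) (ε / 2) (half_pos hε)
  obtain ⟨r, hr, hball⟩ : ∃ r > 0, closedBall (0 : E n) r ⊆ gmap n '' K 0 :=
    Metric.nhds_basis_closedBall.mem_iff.1 (mem_interior_iff_mem_nhds.1 (hK 0).zero_mem_interior)
  -- The scaling factors `(1 ± t) ^ (n - 1)` move points of norm at most `R` by at most `δ ⊓ 1`.
  have hm : 0 < min δ 1 / R := div_pos (lt_min hδ one_pos) hR
  obtain ⟨t, ht0, ht1, htp, htm⟩ : ∃ t : ℝ, 0 < t ∧ t < 1 ∧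
      |(1 + t) ^ (n - 1) - 1| < min δ 1 / R ∧ |(1 - t) ^ (n - 1) - 1| < min δ 1 / R := by
    have hp : ContinuousAt (fun t : ℝ => |(1 + t) ^ (n - 1) - 1|) 0 := by fun_prop
    have hq : ContinuousAt (fun t : ℝ => |(1 - t) ^ (n - 1) - 1|) 0 := by fun_prop
    have hp' := (hp.eventually_lt_const (u := min δ 1 / R) (by simpa using hm)).filter_mono
      (nhdsWithin_le_nhds (s := Ioi 0))
    have hq' := (hq.eventually_lt_const (u := min δ 1 / R) (by simpa using hm)).filter_mono
      (nhdsWithin_le_nhds (s := Ioi 0))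
    obtain ⟨t, ⟨h1, h2⟩, h3⟩ :=
      ((hp'.and hq').and (Ioo_mem_nhdsGT (zero_lt_one (α := ℝ)))).exists
    exact ⟨t, h3.1, h3.2, h1, h2⟩
  have hmove : ∀ x ∈ projBody n (gmap n '' K 0), ∀ c : ℝ, |c - 1| < min δ 1 / R →
      dist (c • x) x ≤ min δ 1 := by
    intro x hx c hc
    rw [dist_eq_norm, show c • x - x = (c - 1) • x by rw [sub_smul, one_smul], norm_smul,
      Real.norm_eq_abs]
    calc |c - 1| * ‖x‖ ≤ min δ 1 / R * R :=
          mul_le_mul hc.le (hbd x hx) (norm_nonneg _) hm.le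
      _ = min δ 1 := div_mul_cancel₀ _ hR.ne'
  have hmemB : ∀ x ∈ projBody n (gmap n '' K 0), ∀ c : ℝ, |c - 1| < min δ 1 / R →
      c • x ∈ closedBall (0 : E n) (R + 1) := by
    intro x hx c hc
    rw [mem_closedBall_zero_iff]
    have h1 := hmove x hx c hc
    rw [dist_eq_norm] at h1
    have h2 := norm_le_norm_add_norm_sub' (c • x) x
    have h3 := hbd x hx
    have h4 := min_le_right δ 1
    linarith
  have hmem0 : ∀ x ∈ projBody n (gmap n '' K 0), x ∈ closedBall (0 : E n) (R + 1) := by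
    intro x hx
    rw [mem_closedBall_zero_iff]
    linarith [hbd x hx]
  have hn1 : 1 ≤ n := by omega
  filter_upwards [gmap_close n K hK hconv (mul_pos ht0 hr)] with i hi
  have hup : projBody n (gmap n '' K i) ⊆ ((1 + t) ^ (n - 1)) • projBody n (gmap n '' K 0) := by
    rw [← projBody_smul hn1 (by linarith)]
    exact projBody_mono hn1 ((hK 0).isCompact_gmap.smul _)
      (subset_smul_of_close (hK 0).convex_gmap ht0 hball hi.1)
  have hlow : ((1 - t) ^ (n - 1)) • projBody n (gmap n '' K 0) ⊆ projBody n (gmap n '' K i) := by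
    rw [← projBody_smul hn1 (by linarith)]
    exact projBody_mono hn1 (hK i).isCompact_gmap
      (smul_subset_of_close (hK 0).convex_gmap (hK i).convex_gmap
        (hK i).isCompact_gmap.isClosed hr ht0 ht1 hball hi.2)
  rw [Real.dist_eq, sub_zero, abs_of_nonneg hausdorffDist_nonneg]
  refine lt_of_le_of_lt (hausdorffDist_le_of_mem_dist (half_pos hε).le ?_ ?_) (half_lt_self hε)
  · rintro _ ⟨x, hx, rfl⟩
    obtain ⟨y, hy, rfl⟩ := hup hx
    exact ⟨_, ⟨y, hy, rfl⟩, hδd _ (hmemB y hy _ htp) _ (hmem0 y hy)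
      ((hmove y hy _ htp).trans (min_le_left _ _))⟩
  · rintro _ ⟨y, hy, rfl⟩
    refine ⟨_, ⟨_, hlow ⟨y, hy, rfl⟩, rfl⟩, hδd _ (hmem0 y hy) _ (hmemB y hy _ htm) ?_⟩
    rw [dist_comm]
    exact (hmove y hy _ htm).trans (min_le_left _ _)

end PPI
end
end
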